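/- Let a ∈ ℝ with |a| ≤ 1/2 and let b > π/2. Let Γ = ℤ(1,0) + ℤ(a,b) ⊂ ℝ², let ω : ℝ² → ℝ be smooth and Γ-periodic, let λ > 0, and let φ = (φ₁, φ₂) : ℝ² → ℂ² be smooth, not identically zero, satisfying the equivariance φ(p + (1,0)) = φ(p) and φ(p + (a,b)) = −φ(p) for all p ∈ ℝ², together with (∂ₓ − i∂_y)φ₂ = λ e^{ω} φ₁ and −(∂ₓ + i∂_y)φ₁ = λ e^{ω} φ₂ on ℝ². Then λ² · b · ∫₀¹∫₀¹ e^{2ω(s + ta, tb)} ds dt ≥ π²/b. (Theorem 4.4 for the non-trivial spin structure: every positive Dirac eigenvalue of a metric conformal to the flat metric, normalized by the square root of the area, is at least π/√b.) -/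

import Mathlib

/-- Partial derivative in the first coordinate direction of a map on `ℝ × ℝ`. -/
noncomputable def dX (f : ℝ × ℝ → ℂ) (p : ℝ × ℝ) : ℂ := fderiv ℝ f p (1, 0)

/-- Partial derivative in the second coordinate direction of a map on `ℝ × ℝ`. -/
noncomputable def dY (f : ℝ × ℝ → ℂ) (p : ℝ × ℝ) : ℂ := fderiv ℝ f p (0, 1)

section

lemma sphere_path_length {V : Type*} [NormedAddCommGroup V] [InnerProductSpace ℝ V]
    (w w' : ℝ → V) (hw : ∀ t, HasDerivAt w (w' t) t) (hc : Continuous w')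
    (h1 : ∀ t, ‖w t‖ = 1) (hanti : w 1 = - w 0) :
    Real.pi ≤ ∫ t in (0:ℝ)..1, ‖w' t‖ := by
  have horth : ∀ t, inner ℝ (w t) (w' t) = 0 := by
    intro t
    have h := (hw t).norm_sq
    have h2 : HasDerivAt (fun t => ‖w t‖^2) 0 t := by
      have : (fun t => ‖w t‖^2) = fun _ => (1:ℝ) := by ext t; simp [h1]
      rw [this]; exact hasDerivAt_const _ _
    have := h.unique h2
    linarith
  set g : ℝ → ℝ := fun t => inner ℝ (w 0) (w t) with hg
  set g' : ℝ → ℝ := fun t => inner ℝ (w 0) (w' t) with hg'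
  have hgd : ∀ t, HasDerivAt g (g' t) t := by
    intro t
    have := (hasDerivAt_const t (w 0)).inner ℝ (hw t)
    simpa [hg, hg'] using this
  have hgb : ∀ t, g t ^ 2 ≤ 1 := by
    intro t
    have := abs_real_inner_le_norm (w 0) (w t)
    rw [h1, h1] at this
    rw [sq_le_one_iff_abs_le_one]; simpa using this
  have hgl : ∀ t, g' t ^ 2 ≤ ‖w' t‖ ^ 2 * (1 - g t ^ 2) := by
    intro t
    have e1 : g' t = inner ℝ (w 0 - g t • w t) (w' t) := by
      rw [inner_sub_left, inner_smul_left, horth]; simp [hg']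
    have e2 : ‖w 0 - g t • w t‖ ^ 2 = 1 - g t ^ 2 := by
      rw [norm_sub_sq_real, inner_smul_right, norm_smul, h1, h1]
      simp only [Real.norm_eq_abs, mul_one, sq_abs]
      change 1 ^ 2 - 2 * (g t * g t) + g t ^ 2 = _
      ring
    have := abs_real_inner_le_norm (w 0 - g t • w t) (w' t)
    rw [← e1] at this
    calc g' t ^ 2 = |g' t| ^ 2 := (sq_abs _).symm
      _ ≤ (‖w 0 - g t • w t‖ * ‖w' t‖)^2 := by gcongr
      _ = _ := by rw [mul_pow, e2]; ring
  have key : ∀ κ : ℝ, κ ∈ Set.Ioo (0:ℝ) 1 →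
      Real.arcsin κ - Real.arcsin (-κ) ≤ ∫ t in (0:ℝ)..1, ‖w' t‖ := by
    intro κ hκ
    have hlt : ∀ t, (κ * g t)^2 < 1 := by
      intro t
      have := hgb t
      have h2 : κ ^ 2 < 1 := by nlinarith [hκ.1, hκ.2]
      rw [mul_pow]; nlinarith [sq_nonneg (g t), sq_nonneg κ]
    have hne1 : ∀ t, κ * g t ≠ -1 := fun t h => by have := hlt t; rw [h] at this; norm_num at this
    have hne2 : ∀ t, κ * g t ≠ 1 := fun t h => by have := hlt t; rw [h] at this; norm_num at this
    have hd : ∀ t, HasDerivAt (fun t => Real.arcsin (κ * g t))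
        (1 / √(1 - (κ * g t)^2) * (κ * g' t)) t := fun t =>
      HasDerivAt.comp (h₂ := Real.arcsin) t (Real.hasDerivAt_arcsin (hne1 t) (hne2 t))
        ((hgd t).const_mul κ)
    have hgc : Continuous g := continuous_iff_continuousAt.2 fun t => (hgd t).continuousAt
    have hgc' : Continuous g' := by
      simp only [hg']; fun_prop
    have hcont : Continuous (fun t => 1 / √(1 - (κ * g t)^2) * (κ * g' t)) := by
      refine Continuous.mul (Continuous.div continuous_const (by fun_prop) ?_) (by fun_prop)
      intro t
      exact (Real.sqrt_pos.2 (by linarith [hlt t])).ne'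
    have hbd : ∀ t, |1 / √(1 - (κ * g t)^2) * (κ * g' t)| ≤ ‖w' t‖ := by
      intro t
      apply abs_le_of_sq_le_sq _ (norm_nonneg _)
      have hp : 0 < 1 - (κ * g t)^2 := by linarith [hlt t]
      rw [mul_pow, div_pow, Real.sq_sqrt hp.le, one_pow, one_div, inv_mul_le_iff₀ hp]
      have h1 := hgl t
      have h2 : κ ^ 2 ≤ 1 := by nlinarith [hκ.1, hκ.2]
      have h3 := hgb t
      have h4 := sq_nonneg (‖w' t‖)
      have h5 := mul_le_mul_of_nonneg_left h1 (sq_nonneg κ)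
      nlinarith [mul_nonneg h4 (sub_nonneg.2 h2)]
    have hint := intervalIntegral.integral_eq_sub_of_hasDerivAt (a := 0) (b := 1)
      (fun t _ => hd t) (hcont.intervalIntegrable _ _)
    have g0 : g 0 = 1 := by simp [hg, h1]
    have g1 : g 1 = -1 := by simp [hg, h1, hanti]
    rw [g0, g1] at hint
    have := intervalIntegral.norm_integral_le_integral_norm (a := 0) (b := 1) (μ := MeasureTheory.volume)
      (f := fun t => 1 / √(1 - (κ * g t)^2) * (κ * g' t)) (by norm_num)
    rw [hint] at this
    have h3 : ∫ t in (0:ℝ)..1, ‖1 / √(1 - (κ * g t)^2) * (κ * g' t)‖ ≤ ∫ t in (0:ℝ)..1, ‖w' t‖ := by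
      apply intervalIntegral.integral_mono_on (by norm_num) (hcont.norm.intervalIntegrable _ _)
        (hc.norm.intervalIntegrable _ _)
      intro t _; exact hbd t
    have h4 := neg_abs_le (Real.arcsin (κ * -1) - Real.arcsin (κ * 1))
    rw [Real.norm_eq_abs] at this
    simp only [mul_neg, mul_one] at *
    linarith
  have hlim : Filter.Tendsto (fun κ => Real.arcsin κ - Real.arcsin (-κ)) (nhdsWithin 1 (Set.Iio 1))
      (nhds Real.pi) := by
    have : Real.pi = Real.arcsin 1 - Real.arcsin (-1) := by simp
    rw [this]
    apply tendsto_nhdsWithin_of_tendsto_nhds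
    have hc : Continuous (fun κ => Real.arcsin κ - Real.arcsin (-κ)) := by fun_prop
    exact hc.tendsto 1
  refine le_of_tendsto hlim ?_
  filter_upwards [Ioo_mem_nhdsLT (show (0:ℝ) < 1 by norm_num)] with κ hκ using key κ hκ

lemma sq_integral_le (f : ℝ → ℝ) (hf : Continuous f) :
    (∫ t in (0:ℝ)..1, f t) ^ 2 ≤ ∫ t in (0:ℝ)..1, f t ^ 2 := by
  set m := ∫ t in (0:ℝ)..1, f t with hm
  have h : 0 ≤ ∫ t in (0:ℝ)..1, (f t - m)^2 :=
    intervalIntegral.integral_nonneg (by norm_num) fun t _ => sq_nonneg _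
  have e : ∫ t in (0:ℝ)..1, (f t - m)^2 = (∫ t in (0:ℝ)..1, f t ^ 2) - 2 * m * m + m ^ 2 := by
    have : ∀ t, (f t - m)^2 = f t ^ 2 - 2 * m * f t + m ^ 2 := fun t => by ring
    simp_rw [this]
    rw [intervalIntegral.integral_add, intervalIntegral.integral_sub, intervalIntegral.integral_const_mul, ← hm]
    · simp
    all_goals exact Continuous.intervalIntegrable (by fun_prop) _ _
  nlinarith

lemma line_bound {V : Type*} [NormedAddCommGroup V] [InnerProductSpace ℂ V]
    (Z Z' : ℝ → V) (hZ : ∀ t, HasDerivAt Z (Z' t) t) (hc : Continuous Z')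
    (hne : ∀ t, Z t ≠ 0) (hanti : Z 1 = - Z 0) :
    Real.pi ^ 2 - (∫ t in (0:ℝ)..1, (inner ℂ (Z t) (Z' t)).im / ‖Z t‖ ^ 2) ^ 2 ≤
    ∫ t in (0:ℝ)..1, (‖Z' t‖ ^ 2 / ‖Z t‖ ^ 2 - ‖inner ℂ (Z t) (Z' t)‖ ^ 2 / (‖Z t‖ ^ 2) ^ 2) := by
  have hZc : Continuous Z := continuous_iff_continuousAt.2 fun t => (hZ t).continuousAt
  have hpos : ∀ t, 0 < ‖Z t‖ := fun t => norm_pos_iff.2 (hne t)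
  have hne2 : ∀ t, ‖Z t‖ ^ 2 ≠ 0 := fun t => (pow_pos (hpos t) 2).ne'
  have hinc : Continuous fun t => inner ℂ (Z t) (Z' t) := hZc.inner hc
  set A : ℝ → ℝ := fun t => (inner ℂ (Z t) (Z' t)).im / ‖Z t‖ ^ 2 with hA
  have hAc : Continuous A := by
    apply Continuous.div (Complex.continuous_im.comp hinc) (by fun_prop) hne2
  set η := ∫ t in (0:ℝ)..1, A t with hη
  set θ : ℝ → ℝ := fun t => η * t - ∫ r in (0:ℝ)..t, A r with hθ
  have hθd : ∀ t, HasDerivAt θ (η - A t) t := by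
    intro t
    have h1 := (hasDerivAt_id t).const_mul η
    have h2 := hAc.integral_hasStrictDerivAt 0 t
    exact (h1.sub h2.hasDerivAt).congr_deriv (by simp)
  -- the gauge factor
  set c : ℝ → ℂ := fun t => Complex.exp (θ t * Complex.I) * ((‖Z t‖⁻¹ : ℝ) : ℂ) with hcdef
  set ρ' : ℝ → ℝ := fun t => (inner ℂ (Z t) (Z' t)).re with hρ'
  have hnormd : ∀ t, HasDerivAt (fun t => ‖Z t‖⁻¹) (-(ρ' t / ‖Z t‖ ^ 3)) t := by
    intro t
    let _ : InnerProductSpace ℝ V := InnerProductSpace.complexToReal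
    have h1 : HasDerivAt (fun t => ‖Z t‖ ^ 2) (2 * ρ' t) t := by
      have := (hZ t).norm_sq
      exact this
    have h2 := (h1.sqrt (hne2 t)).inv (by rw [Real.sqrt_sq (hpos t).le]; exact (hpos t).ne')
    have e : (fun t => ‖Z t‖⁻¹) = (fun t => √(‖Z t‖ ^ 2))⁻¹ := by
      ext t; simp
    rw [e]
    refine h2.congr_deriv ?_
    simp only [Real.sqrt_sq (hpos t).le]
    have := (hpos t).ne'
    field_simp
  set μ : ℝ → ℂ := fun t => (η - A t : ℝ) * Complex.I - ((ρ' t / ‖Z t‖ ^ 2 : ℝ) : ℂ) with hμ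
  have hcd : ∀ t, HasDerivAt c (c t * μ t) t := by
    intro t
    have h1 : HasDerivAt (fun t => Complex.exp (θ t * Complex.I))
      (Complex.exp (θ t * Complex.I) * ((η - A t : ℝ) * Complex.I)) t := by
      exact (((hθd t).ofReal_comp).mul_const Complex.I).cexp
    have h2 := h1.mul ((hnormd t).ofReal_comp)
    refine h2.congr_deriv ?_
    simp only [hcdef, hμ]
    have : ((‖Z t‖ : ℝ) : ℂ) ≠ 0 := by exact_mod_cast (hpos t).ne'
    push_cast
    field_simp
    ring
  have hcn : ∀ t, ‖c t‖ = ‖Z t‖⁻¹ := by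
    intro t
    simp [hcdef, Complex.norm_exp_ofReal_mul_I]
  set w : ℝ → V := fun t => c t • Z t with hw
  set w' : ℝ → V := fun t => c t • (μ t • Z t + Z' t) with hw'
  have hwd : ∀ t, HasDerivAt w (w' t) t := by
    intro t
    have := (hcd t).smul (hZ t)
    refine this.congr_deriv ?_
    simp only [hw', smul_add, smul_smul]
    rw [add_comm]
  have hcc : Continuous c := continuous_iff_continuousAt.2 fun t => (hcd t).continuousAt
  have hμc : Continuous μ := by
    have h1 : Continuous fun t => ρ' t / ‖Z t‖ ^ 2 :=
      Continuous.div (Complex.continuous_re.comp hinc) (by fun_prop) hne2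
    simp only [hμ]
    fun_prop
  have hw'c : Continuous w' := by simp only [hw']; fun_prop
  have hw1 : ∀ t, ‖w t‖ = 1 := by
    intro t; simp only [hw, norm_smul, hcn]; exact inv_mul_cancel₀ (hpos t).ne'
  have hwa : w 1 = - w 0 := by
    have e0 : θ 0 = 0 := by simp [hθ]
    have e1 : θ 1 = 0 := by simp [hθ, hη]
    simp [hw, hcdef, e0, e1, hanti]
  have hmain : Real.pi ^ 2 ≤ ∫ t in (0:ℝ)..1, ‖w' t‖ ^ 2 := by
    let _ : InnerProductSpace ℝ V := InnerProductSpace.complexToReal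
    have h1 := sphere_path_length w w' hwd hw'c hw1 hwa
    refine le_trans ?_ (sq_integral_le _ hw'c.norm)
    gcongr
  have hnw : ∀ t, ‖w' t‖ ^ 2 = η ^ 2 +
      (‖Z' t‖ ^ 2 / ‖Z t‖ ^ 2 - ‖inner ℂ (Z t) (Z' t)‖ ^ 2 / (‖Z t‖ ^ 2) ^ 2) := by
    intro t
    simp only [hw', norm_smul, hcn, mul_pow]
    rw [@norm_add_sq ℂ, inner_smul_left, norm_smul, mul_pow]
    have e1 : ‖μ t‖ ^ 2 = (η - A t)^2 + (ρ' t / ‖Z t‖ ^ 2)^2 := by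
      rw [← Complex.normSq_eq_norm_sq, Complex.normSq_apply]
      simp only [hμ, Complex.sub_re, Complex.sub_im, Complex.re_ofReal_mul, Complex.im_ofReal_mul,
        Complex.I_re, Complex.I_im, Complex.ofReal_re, Complex.ofReal_im]; ring
    have e2 : RCLike.re ((starRingEnd ℂ) (μ t) * inner ℂ (Z t) (Z' t)) =
       (η - A t) * (A t * ‖Z t‖ ^ 2) - ρ' t / ‖Z t‖ ^ 2 * ρ' t := by
      have : (inner ℂ (Z t) (Z' t)).im = A t * ‖Z t‖ ^ 2 := by
        simp only [hA]; exact (div_mul_cancel₀ _ (hne2 t)).symm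
      change ((starRingEnd ℂ) (μ t) * inner ℂ (Z t) (Z' t)).re = _
      have h2 : (inner ℂ (Z t) (Z' t)).re = ρ' t := rfl
      simp only [hμ, Complex.mul_re, Complex.conj_re, Complex.conj_im, this, h2, Complex.sub_re,
        Complex.sub_im, Complex.re_ofReal_mul, Complex.im_ofReal_mul,
        Complex.I_re, Complex.I_im, Complex.ofReal_re, Complex.ofReal_im]
      ring
    have e3 : ‖inner ℂ (Z t) (Z' t)‖ ^ 2 = ρ' t ^ 2 + (A t * ‖Z t‖ ^ 2) ^ 2 := by
      rw [← Complex.normSq_eq_norm_sq, Complex.normSq_apply]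
      have : (inner ℂ (Z t) (Z' t)).im = A t * ‖Z t‖ ^ 2 := by
        simp only [hA]; exact (div_mul_cancel₀ _ (hne2 t)).symm
      rw [this]; simp only [hρ']; ring
    rw [e1, e2, e3]
    have := (hpos t).ne'
    field_simp
    ring
  simp_rw [hnw] at hmain
  rw [intervalIntegral.integral_add (by simp) ?_] at hmain
  · simp at hmain; linarith
  · apply Continuous.intervalIntegrable
    apply Continuous.sub
    · exact Continuous.div (by fun_prop) (by fun_prop) hne2
    · exact Continuous.div (by fun_prop) (by fun_prop) (fun t => pow_ne_zero 2 (hne2 t))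

end

section

lemma periodic_variation (g g' : ℝ → ℝ) (hg : ∀ t, HasDerivAt g (g' t) t) (hc : Continuous g')
    (hp : Function.Periodic g 1) (hp' : Function.Periodic g' 1) (s₁ s₂ : ℝ) :
    2 * (g s₂ - g s₁) ≤ ∫ t in (0:ℝ)..1, |g' t| := by
  obtain ⟨s, hs, hgs⟩ := hp.exists_mem_Ico one_pos s₂ s₁
  rw [hgs]
  have e : ∫ t in (0:ℝ)..1, |g' t| = ∫ t in s₁..(s₁+1), |g' t| := by
    have hpa : Function.Periodic (fun t => |g' t|) 1 := fun t => by simp only [hp' t]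
    have := hpa.intervalIntegral_add_eq 0 s₁
    simpa using this
  have hi : ∀ x y, IntervalIntegrable (fun t => |g' t|) MeasureTheory.volume x y :=
    fun x y => hc.abs.intervalIntegrable _ _
  have hi' : ∀ x y, IntervalIntegrable g' MeasureTheory.volume x y :=
    fun x y => hc.intervalIntegrable _ _
  have key : ∀ x y, x ≤ y → |g y - g x| ≤ ∫ t in x..y, |g' t| := by
    intro x y hxy
    rw [← intervalIntegral.integral_eq_sub_of_hasDerivAt (fun t _ => hg t) (hi' x y)]
    exact intervalIntegral.abs_integral_le_integral_abs hxy
  rw [e, ← intervalIntegral.integral_add_adjacent_intervals (hi s₁ s) (hi s (s₁+1))]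
  have h1 := key s₁ s hs.1
  have h2 := key s (s₁+1) hs.2.le
  rw [hp s₁] at h2
  have h3 := le_abs_self (g s - g s₁)
  have h4 := neg_abs_le (g s₁ - g s)
  linarith

lemma choose_cutoff (η η' : ℝ → ℝ) (hη : ∀ t, HasDerivAt η (η' t) t) (hc : Continuous η')
    (hp : Function.Periodic η 1) (hp' : Function.Periodic η' 1)
    (hmean : ∫ t in (0:ℝ)..1, η t = 0) (hvar : ∫ t in (0:ℝ)..1, |η' t| ≤ 4 * Real.pi) :
    ∃ c : ℝ → ℝ, Continuous c ∧ (∀ s, 0 ≤ c s) ∧ (∀ s, c s ≤ 1) ∧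
      ∫ s in (0:ℝ)..1, (η s ^ 2 + Real.pi ^ 2 * c s ^ 2) ≤
      ∫ s in (0:ℝ)..1, (6 / 5 * (c s * |η' s|)) := by
  have hηc : Continuous η := continuous_iff_continuousAt.2 fun t => (hη t).continuousAt
  obtain ⟨s₁, -, h1⟩ := isCompact_Icc.exists_isMinOn (s := Set.Icc (0:ℝ) 1) ⟨0, by simp⟩ hηc.continuousOn
  obtain ⟨s₂, -, h2⟩ := isCompact_Icc.exists_isMaxOn (s := Set.Icc (0:ℝ) 1) ⟨0, by simp⟩ hηc.continuousOn
  have hmin : ∀ s, η s₁ ≤ η s := by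
    intro s
    obtain ⟨r, hr, e⟩ := hp.exists_mem_Ico₀ one_pos s
    rw [e]; exact h1 ⟨hr.1, hr.2.le⟩
  have hmax : ∀ s, η s ≤ η s₂ := by
    intro s
    obtain ⟨r, hr, e⟩ := hp.exists_mem_Ico₀ one_pos s
    rw [e]; exact h2 ⟨hr.1, hr.2.le⟩
  set m := (η s₂ - η s₁) / 2 with hm
  set μ := (η s₂ + η s₁) / 2 with hμ
  have hm0 : 0 ≤ m := by have := hmin s₂; linarith
  rcases hm0.eq_or_lt with h0 | hmpos
  · have hconst : ∀ s, η s = η s₁ := fun s => by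
      have := hmin s; have := hmax s; linarith
    have : ∀ s, η s = 0 := by
      intro s
      have : ∫ t in (0:ℝ)..1, η t = η s₁ := by simp_rw [hconst]; simp
      rw [hconst s, ← this, hmean]
    exact ⟨fun _ => 0, continuous_const, by simp, by simp, by simp [this]⟩
  have hπ := Real.pi_pos
  have hd : ∀ s, (η s - μ) ^ 2 ≤ m ^ 2 := by
    intro s
    have := hmin s; have := hmax s
    apply sq_le_sq' <;> linarith
  have hmle : m ≤ Real.pi := by
    have := periodic_variation η η' hη hc hp hp' s₁ s₂
    linarith
  set c : ℝ → ℝ := fun s => (m - (η s - μ)^2 / (2 * m)) / Real.pi with hcd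
  have hdm : ∀ s, (η s - μ)^2 / (2 * m) ≤ m / 2 := by
    intro s
    rw [div_le_iff₀ (by positivity)]
    have := hd s; nlinarith
  have hdm0 : ∀ s, 0 ≤ (η s - μ)^2 / (2 * m) := fun s => by positivity
  have hcc : Continuous c := by simp only [hcd]; fun_prop
  have hc0 : ∀ s, 0 ≤ c s := fun s => div_nonneg (by linarith [hdm s]) hπ.le
  refine ⟨c, hcc, hc0, ?_, ?_⟩
  · intro s
    simp only [hcd]
    rw [div_le_one hπ]; linarith [hdm0 s]
  have hgain : 2 * (5 / 3 * m ^ 2 / Real.pi) ≤ ∫ s in (0:ℝ)..1, (c s * |η' s|) := by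
    set Φ : ℝ → ℝ := fun y => (m * y - (y - μ)^3 / (6 * m)) / Real.pi with hΦ
    have hΦd : ∀ s, HasDerivAt (fun s => Φ (η s)) (c s * η' s) s := by
      intro s
      have h1 : HasDerivAt (fun s => (m * η s - (η s - μ)^3 / (6 * m)) / Real.pi)
        ((m * η' s - (3 * (η s - μ)^2 * η' s) / (6 * m)) / Real.pi) s := by
        have := ((((hη s).sub_const μ).pow 3).div_const (6 * m))
        exact ((((hη s).const_mul m).sub this).div_const Real.pi).congr_deriv (by norm_num)
      refine h1.congr_deriv ?_
      simp only [hcd]; field_simp; ring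
    have := periodic_variation (fun s => Φ (η s)) (fun s => c s * η' s) hΦd (by fun_prop)
      (fun s => by simp only [hp s]) (fun s => by simp only [hcd, hp s, hp' s]) s₁ s₂
    simp_rw [abs_mul, fun s => abs_of_nonneg (hc0 s)] at this
    refine le_trans (le_of_eq ?_) this
    have e1 : η s₂ = μ + m := by simp only [hμ, hm]; ring
    have e2 : η s₁ = μ - m := by simp only [hμ, hm]; ring
    rw [e1, e2]
    simp only [hΦ]; field_simp; ring
  have hint : ∀ f : ℝ → ℝ, Continuous f → IntervalIntegrable f MeasureTheory.volume 0 1 :=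
    fun f hf => hf.intervalIntegrable _ _
  have hloss : ∫ s in (0:ℝ)..1, (η s ^ 2 + Real.pi ^ 2 * c s ^ 2) ≤ 5 / 4 * m ^ 2 := by
    have e : ∀ s, η s ^ 2 + Real.pi ^ 2 * c s ^ 2 ≤ 5 / 4 * m ^ 2 + 2 * μ * η s - μ^2 := by
      intro s
      have h1 : Real.pi ^ 2 * c s ^ 2 = (m - (η s - μ)^2 / (2 * m))^2 := by
        simp only [hcd]; field_simp
      have h2 : (m - (η s - μ)^2 / (2 * m))^2 = m^2 - (η s - μ)^2 + ((η s - μ)^2 / (2 * m))^2 := by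
        field_simp; ring
      have h3 : ((η s - μ)^2 / (2 * m))^2 ≤ (m/2)^2 := by
        have := hdm s; have := hdm0 s; gcongr
      rw [h1, h2]; nlinarith
    calc _ ≤ ∫ s in (0:ℝ)..1, (5 / 4 * m ^ 2 + 2 * μ * η s - μ^2) :=
          intervalIntegral.integral_mono_on (by norm_num) (hint _ (by fun_prop)) (hint _ (by fun_prop))
            fun s _ => e s
      _ = 5 / 4 * m ^ 2 - μ ^ 2 := by
          rw [intervalIntegral.integral_sub (hint _ (by fun_prop)) (hint _ (by fun_prop)),
            intervalIntegral.integral_add (hint _ (by fun_prop)) (hint _ (by fun_prop)),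
            intervalIntegral.integral_const_mul (2 * μ), hmean]
          simp
      _ ≤ _ := by nlinarith [sq_nonneg μ]
  rw [intervalIntegral.integral_const_mul]
  refine hloss.trans (le_trans ?_ (mul_le_mul_of_nonneg_left hgain (by norm_num)))
  have h5 : Real.pi ≤ 3.2 := by linarith [Real.pi_lt_d2]
  have : 5 / 4 * m ^ 2 ≤ 4 * m ^ 2 / Real.pi := by
    rw [le_div_iff₀ hπ]; nlinarith [sq_nonneg m]
  calc _ ≤ _ := this
    _ = _ := by ring

end

section

/-- partial derivative along the first coordinate -/
noncomputable def pX {F : Type*} [NormedAddCommGroup F] [NormedSpace ℝ F]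
    (f : ℝ × ℝ → F) (p : ℝ × ℝ) : F := fderiv ℝ f p (1, 0)

/-- partial derivative along the second coordinate -/
noncomputable def pY {F : Type*} [NormedAddCommGroup F] [NormedSpace ℝ F]
    (f : ℝ × ℝ → F) (p : ℝ × ℝ) : F := fderiv ℝ f p (0, 1)

lemma swap_int (F : ℝ → ℝ → ℝ) (hF : Continuous (Function.uncurry F)) (a b c d : ℝ) :
    ∫ x in a..b, ∫ y in c..d, F x y = ∫ y in c..d, ∫ x in a..b, F x y := by
  apply MeasureTheory.intervalIntegral_intervalIntegral_swap
  have : MeasureTheory.IntegrableOn (Function.uncurry F) (Set.uIcc a b ×ˢ Set.uIcc c d) := by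
    apply hF.continuousOn.integrableOn_compact
    exact isCompact_uIcc.prod isCompact_uIcc
  exact this.mono_set (Set.prod_mono Set.uIoc_subset_uIcc Set.uIoc_subset_uIcc)

lemma cont_pX {F : Type*} [NormedAddCommGroup F] [NormedSpace ℝ F]
    {f : ℝ × ℝ → F} (hf : ContDiff ℝ 1 f) : Continuous (pX f) :=
  (hf.continuous_fderiv (by norm_num)).clm_apply continuous_const

lemma cont_pY {F : Type*} [NormedAddCommGroup F] [NormedSpace ℝ F]
    {f : ℝ × ℝ → F} (hf : ContDiff ℝ 1 f) : Continuous (pY f) :=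
  (hf.continuous_fderiv (by norm_num)).clm_apply continuous_const

lemma contDiff_pX {F : Type*} [NormedAddCommGroup F] [NormedSpace ℝ F] {n : ℕ}
    {f : ℝ × ℝ → F} (hf : ContDiff ℝ (n+1) f) : ContDiff ℝ n (pX f) :=
  (hf.fderiv_right (m := n) le_rfl).clm_apply contDiff_const

lemma contDiff_pY {F : Type*} [NormedAddCommGroup F] [NormedSpace ℝ F] {n : ℕ}
    {f : ℝ × ℝ → F} (hf : ContDiff ℝ (n+1) f) : ContDiff ℝ n (pY f) :=
  (hf.fderiv_right (m := n) le_rfl).clm_apply contDiff_const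

lemma fderiv_split {F : Type*} [NormedAddCommGroup F] [NormedSpace ℝ F]
    (f : ℝ × ℝ → F) (p : ℝ × ℝ) (u v : ℝ) :
    fderiv ℝ f p (u, v) = u • pX f p + v • pY f p := by
  have : ((u, v) : ℝ × ℝ) = u • ((1, 0) : ℝ × ℝ) + v • ((0, 1) : ℝ × ℝ) := by simp
  rw [this, map_add, map_smul, map_smul]; rfl

lemma hasDerivAt_line {F : Type*} [NormedAddCommGroup F] [NormedSpace ℝ F]
    {f : ℝ × ℝ → F} (hf : Differentiable ℝ f) (s u v t : ℝ) :
    HasDerivAt (fun t => f (s + t * u, t * v))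
      (u • pX f (s + t * u, t * v) + v • pY f (s + t * u, t * v)) t := by
  rw [← fderiv_split]
  have h1 : HasDerivAt (fun t : ℝ => ((s + t * u, t * v) : ℝ × ℝ)) (u, v) t := by
    have hu : HasDerivAt (fun t : ℝ => s + t * u) u t := by
      simpa using ((hasDerivAt_id t).mul_const u).const_add s
    have hv : HasDerivAt (fun t : ℝ => t * v) v t := by
      simpa using ((hasDerivAt_id t).mul_const v)
    exact hu.prodMk hv
  exact (hf _).hasFDerivAt.comp_hasDerivAt t h1

lemma hasDerivAt_horiz {F : Type*} [NormedAddCommGroup F] [NormedSpace ℝ F]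
    {f : ℝ × ℝ → F} (hf : Differentiable ℝ f) (s x y : ℝ) :
    HasDerivAt (fun s => f (s + x, y)) (pX f (s + x, y)) s := by
  have h1 : HasDerivAt (fun s : ℝ => ((s + x, y) : ℝ × ℝ)) (1, 0) s :=
    ((hasDerivAt_id s).add_const x).prodMk (hasDerivAt_const s y)
  exact (hf _).hasFDerivAt.comp_hasDerivAt s h1

lemma pX_shift {F : Type*} [NormedAddCommGroup F] [NormedSpace ℝ F]
    {f : ℝ × ℝ → F} {u v : ℝ} (hf : ∀ p : ℝ × ℝ, f (p.1 + u, p.2 + v) = f p) (p : ℝ × ℝ) :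
    pX f (p.1 + u, p.2 + v) = pX f p := by
  have h : (fun q : ℝ × ℝ => f (q + (u, v))) = f := by ext q; exact hf q
  unfold pX
  conv_rhs => rw [← h]
  rw [fderiv_comp_add_right]; rfl

lemma pY_shift {F : Type*} [NormedAddCommGroup F] [NormedSpace ℝ F]
    {f : ℝ × ℝ → F} {u v : ℝ} (hf : ∀ p : ℝ × ℝ, f (p.1 + u, p.2 + v) = f p) (p : ℝ × ℝ) :
    pY f (p.1 + u, p.2 + v) = pY f p := by
  have h : (fun q : ℝ × ℝ => f (q + (u, v))) = f := by ext q; exact hf q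
  unfold pY
  conv_rhs => rw [← h]
  rw [fderiv_comp_add_right]; rfl

/-- doubly periodic function -/
def Per (a b : ℝ) {F : Type*} (f : ℝ × ℝ → F) : Prop :=
  (∀ p : ℝ × ℝ, f (p.1 + 1, p.2) = f p) ∧ (∀ p : ℝ × ℝ, f (p.1 + a, p.2 + b) = f p)

lemma Per.pX {a b : ℝ} {F : Type*} [NormedAddCommGroup F] [NormedSpace ℝ F]
    {f : ℝ × ℝ → F} (hf : Per a b f) : Per a b (pX f) := by
  refine ⟨fun p => ?_, pX_shift hf.2⟩
  have := pX_shift (f := f) (u := 1) (v := 0) (fun p => by simpa using hf.1 p) p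
  simpa using this

lemma Per.pY {a b : ℝ} {F : Type*} [NormedAddCommGroup F] [NormedSpace ℝ F]
    {f : ℝ × ℝ → F} (hf : Per a b f) : Per a b (pY f) := by
  refine ⟨fun p => ?_, pY_shift hf.2⟩
  have := pY_shift (f := f) (u := 1) (v := 0) (fun p => by simpa using hf.1 p) p
  simpa using this

lemma Per.int {a b : ℝ} {F : Type*} {f : ℝ × ℝ → F} (hf : Per a b f) (n : ℤ) : Per (a + n) b f := by
  refine ⟨hf.1, fun p => ?_⟩
  have hp : Function.Periodic (fun x => f (x + a, p.2 + b)) 1 := by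
    intro x
    have := hf.1 (x + a, p.2 + b)
    simp only at this ⊢
    rw [← this]; congr 2; ring
  have := hp.int_mul n p.1
  simp only [mul_one] at this
  rw [← hf.2 p, ← this]; congr 2; ring

/-- the integral over the fundamental domain, sheared coordinates -/
noncomputable def J (u b : ℝ) (f : ℝ × ℝ → ℝ) : ℝ :=
  ∫ s in (0:ℝ)..1, ∫ t in (0:ℝ)..1, f (s + t * u, t * b)

lemma cont_inner (u b : ℝ) {f : ℝ × ℝ → ℝ} (hf : Continuous f) :
    Continuous fun s => ∫ t in (0:ℝ)..1, f (s + t * u, t * b) := by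
  apply intervalIntegral.continuous_parametric_intervalIntegral_of_continuous'
  simp only [Function.uncurry_def]; fun_prop

lemma J_swap (u b : ℝ) {f : ℝ × ℝ → ℝ} (hf : Continuous f) :
    J u b f = ∫ t in (0:ℝ)..1, ∫ s in (0:ℝ)..1, f (s + t * u, t * b) := by
  apply swap_int (fun s t => f (s + t * u, t * b))
  simp only [Function.uncurry_def]; fun_prop

lemma J_indep (u u' b : ℝ) {f : ℝ × ℝ → ℝ} (hf : Continuous f)
    (hp : ∀ p : ℝ × ℝ, f (p.1 + 1, p.2) = f p) : J u b f = J u' b f := by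
  rw [J_swap u b hf, J_swap u' b hf]
  congr 1; ext t
  have key : ∀ c : ℝ, ∫ s in (0:ℝ)..1, f (s + c, t * b) = ∫ s in (0:ℝ)..1, f (s, t * b) := by
    intro c
    rw [intervalIntegral.integral_comp_add_right (fun s => f (s, t * b)) c]
    have hper : Function.Periodic (fun s => f (s, t * b)) 1 := fun s => hp (s, t * b)
    have := hper.intervalIntegral_add_eq (0 + c) 0
    simpa [add_comm] using this
  rw [key, key]

lemma J_add (u b : ℝ) {f g : ℝ × ℝ → ℝ} (hf : Continuous f) (hg : Continuous g) :
    J u b (fun p => f p + g p) = J u b f + J u b g := by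
  unfold J
  rw [← intervalIntegral.integral_add ((cont_inner u b hf).intervalIntegrable _ _)
    ((cont_inner u b hg).intervalIntegrable _ _)]
  congr 1; ext s
  apply intervalIntegral.integral_add <;> apply Continuous.intervalIntegrable <;> fun_prop

lemma J_mul (u b c : ℝ) (f : ℝ × ℝ → ℝ)  :
    J u b (fun p => c * f p) = c * J u b f := by
  unfold J
  simp_rw [intervalIntegral.integral_const_mul]

lemma J_mono (u b : ℝ) {f g : ℝ × ℝ → ℝ} (hf : Continuous f) (hg : Continuous g)
    (h : ∀ p, f p ≤ g p) : J u b f ≤ J u b g := by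
  unfold J
  apply intervalIntegral.integral_mono_on (by norm_num) ((cont_inner u b hf).intervalIntegrable _ _)
    ((cont_inner u b hg).intervalIntegrable _ _)
  intro s _
  apply intervalIntegral.integral_mono_on (by norm_num)
  · apply Continuous.intervalIntegrable; fun_prop
  · apply Continuous.intervalIntegrable; fun_prop
  intro t _; exact h _

lemma deriv_inner (u b : ℝ) {f : ℝ × ℝ → ℝ} (hf : ContDiff ℝ 1 f) (s : ℝ) :
    HasDerivAt (fun s => ∫ t in (0:ℝ)..1, f (s + t * u, t * b))
      (∫ t in (0:ℝ)..1, pX f (s + t * u, t * b)) s := by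
  have hd := hf.differentiable (by norm_num)
  have hfc := hf.continuous
  have hc := cont_pX hf
  have h1 := ((cont_inner u b hc).integral_hasStrictDerivAt 0 s).hasDerivAt
  have e : (fun s => ∫ t in (0:ℝ)..1, f (s + t * u, t * b)) =
      fun s => (∫ t in (0:ℝ)..1, f (0 + t * u, t * b)) +
        ∫ r in (0:ℝ)..s, ∫ t in (0:ℝ)..1, pX f (r + t * u, t * b) := by
    ext s
    rw [swap_int (fun r t => pX f (r + t * u, t * b)) (by simp only [Function.uncurry_def]; fun_prop)]
    rw [← intervalIntegral.integral_add]
    · congr 1; ext t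
      rw [intervalIntegral.integral_eq_sub_of_hasDerivAt
        (fun r _ => hasDerivAt_horiz hd r (t * u) (t * b))]
      · ring
      · apply Continuous.intervalIntegrable; fun_prop
    · apply Continuous.intervalIntegrable; fun_prop
    · apply Continuous.intervalIntegrable
      apply intervalIntegral.continuous_parametric_intervalIntegral_of_continuous'
      simp only [Function.uncurry_def]; fun_prop
  rw [e]
  exact h1.const_add _

lemma line_integral_zero {u b : ℝ} {f : ℝ × ℝ → ℝ} (hf : ContDiff ℝ 1 f) (hp : Per u b f) (s : ℝ) :
    u * (∫ t in (0:ℝ)..1, pX f (s + t * u, t * b)) +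
      b * (∫ t in (0:ℝ)..1, pY f (s + t * u, t * b)) = 0 := by
  have hd := hf.differentiable (by norm_num)
  have hcx := cont_pX hf
  have hcy := cont_pY hf
  have h := intervalIntegral.integral_eq_sub_of_hasDerivAt (a := 0) (b := 1)
    (fun t _ => hasDerivAt_line hd s u b t) (by apply Continuous.intervalIntegrable; fun_prop)
  rw [intervalIntegral.integral_add] at h
  · simp only [smul_eq_mul, intervalIntegral.integral_const_mul] at h
    rw [h]
    have := hp.2 (s, 0)
    simp at this ⊢
    rw [this]; ring
  · apply Continuous.intervalIntegrable; fun_prop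
  · apply Continuous.intervalIntegrable; fun_prop

end

section

theorem scalar_core_aux (a b : ℝ) (hb : Real.pi / 2 < b)
    (ha : a ^ 2 ≤ 1)
    (e g r k : ℝ × ℝ → ℝ) (hec : Continuous e) (hgc : Continuous g) (hrc : Continuous r)
    (hkc : Continuous k) (hk : Per a b k)
    (he0 : ∀ p, 0 ≤ e p) (hg0 : ∀ p, 0 ≤ g p) (hcs : ∀ p, r p ^ 2 + k p ^ 2 ≤ e p * g p)
    (L : ℝ × ℝ → ℝ) (hL : ContDiff ℝ 2 L) (hLp : Per a b L)
    (hLap : ∀ p, pX (pX L) p + pY (pY L) p = 4 * k p)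
    (hline : ∀ s, Real.pi ^ 2 -
        (∫ t in (0:ℝ)..1, (b * pX L (s + t * a, t * b) - a * pY L (s + t * a, t * b)) / 2) ^ 2 ≤
        ∫ t in (0:ℝ)..1, (a ^ 2 * e (s + t * a, t * b) + 2 * a * b * r (s + t * a, t * b)
          + b ^ 2 * g (s + t * a, t * b)))
    (hsign : a * J a b r ≤ 0) :
    Real.pi ^ 2 ≤ b ^ 2 * J a b (fun p => e p + g p) := by
  by_contra! hcon
  have hπ := Real.pi_pos
  have hπ' := Real.pi_gt_d2
  have hbpos : 0 < b := by linarith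
  have hLX1 : ContDiff ℝ 1 (pX L) := by exact_mod_cast contDiff_pX (n := 1) (by exact_mod_cast hL)
  have hLY1 : ContDiff ℝ 1 (pY L) := by exact_mod_cast contDiff_pY (n := 1) (by exact_mod_cast hL)
  have hL1 : ContDiff ℝ 1 L := hL.of_le (by norm_num)
  have hLXc := hLX1.continuous
  have hLYc := hLY1.continuous
  have hLXXc := cont_pX hLX1
  have hLXYc := cont_pX hLY1
  have hLYYc := cont_pY hLY1
  set T : ℝ × ℝ → ℝ := fun p => a ^ 2 * e p + 2 * a * b * r p + b ^ 2 * g p with hT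
  have hTc : Continuous T := by simp only [hT]; fun_prop
  -- eta
  set η : ℝ → ℝ := fun s =>
    ∫ t in (0:ℝ)..1, (b * pX L (s + t * a, t * b) - a * pY L (s + t * a, t * b)) / 2 with hη
  have hη_eq : η = fun s => b / 2 * (∫ t in (0:ℝ)..1, pX L (s + t * a, t * b)) -
      a / 2 * (∫ t in (0:ℝ)..1, pY L (s + t * a, t * b)) := by
    ext s
    simp only [hη]
    rw [← intervalIntegral.integral_const_mul, ← intervalIntegral.integral_const_mul,
      ← intervalIntegral.integral_sub]
    · congr 1; ext t; ring
    all_goals apply Continuous.intervalIntegrable; fun_prop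
  set η' : ℝ → ℝ := fun s => 2 * b * ∫ t in (0:ℝ)..1, k (s + t * a, t * b) with hη'
  have hηd : ∀ s, HasDerivAt η (η' s) s := by
    intro s
    have h1 := ((deriv_inner a b hLX1 s).const_mul (b/2)).sub ((deriv_inner a b hLY1 s).const_mul (a/2))
    rw [hη_eq]
    refine h1.congr_deriv ?_
    have h2 := line_integral_zero hLY1 hLp.pY s
    have h3 : 4 * (∫ t in (0:ℝ)..1, k (s + t * a, t * b)) =
        (∫ t in (0:ℝ)..1, pX (pX L) (s + t * a, t * b)) +
        (∫ t in (0:ℝ)..1, pY (pY L) (s + t * a, t * b)) := by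
      rw [← intervalIntegral.integral_const_mul, ← intervalIntegral.integral_add]
      · congr 1; ext t; exact (hLap _).symm
      all_goals apply Continuous.intervalIntegrable; fun_prop
    simp only [hη']
    linear_combination (-1/2 : ℝ) * h2 - b / 2 * h3
  have hη'c : Continuous η' := continuous_const.mul (cont_inner a b hkc)
  have hper : ∀ {f : ℝ × ℝ → ℝ}, Per a b f → ∀ s t, f (s + 1 + t * a, t * b) = f (s + t * a, t * b) := by
    intro f hf s t
    rw [← hf.1 (s + t * a, t * b)]; congr 2; ring
  have hηp : Function.Periodic η 1 := by
    intro s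
    simp only [hη, hper hLp.pX, hper hLp.pY]
  have hηp' : Function.Periodic η' 1 := by
    intro s
    simp only [hη', hper hk]
  have hmean : ∫ s in (0:ℝ)..1, η s = 0 := by
    have e1 : ∀ s, η s = (b / 2 + a ^ 2 / (2 * b)) * (∫ t in (0:ℝ)..1, pX L (s + t * a, t * b)) := by
      intro s
      have h2 := line_integral_zero hL1 hLp s
      rw [hη_eq]
      simp only
      generalize (∫ t in (0:ℝ)..1, pX L (s + t * a, t * b)) = A at h2 ⊢
      generalize (∫ t in (0:ℝ)..1, pY L (s + t * a, t * b)) = B at h2 ⊢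
      field_simp
      linear_combination (-a) * h2
    simp_rw [e1]
    rw [intervalIntegral.integral_const_mul]
    rw [intervalIntegral.integral_eq_sub_of_hasDerivAt (fun s _ => deriv_inner a b hL1 s)
      ((cont_inner a b hLXc).intervalIntegrable _ _)]
    have : ∀ t, L (1 + t * a, t * b) = L (0 + t * a, t * b) := by
      intro t; have := hper hLp 0 t; rwa [zero_add] at this
    simp only [this, sub_self, mul_zero]
  have hηabs : ∀ s, |η' s| ≤ 2 * b * ∫ t in (0:ℝ)..1, |k (s + t * a, t * b)| := by
    intro s
    simp only [hη', abs_mul, abs_of_pos hbpos, abs_two]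
    gcongr
    exact intervalIntegral.abs_integral_le_integral_abs (by norm_num)
  have hkabs : ∀ p, |k p| ≤ 1 / 2 * (e p + g p) := by
    intro p
    apply abs_le_of_sq_le_sq _ (by have := he0 p; have := hg0 p; positivity)
    nlinarith [hcs p, sq_nonneg (r p), sq_nonneg (e p - g p)]
  have hvar : ∫ s in (0:ℝ)..1, |η' s| ≤ 4 * Real.pi := by
    have h1 : ∫ s in (0:ℝ)..1, |η' s| ≤ 2 * b * J a b (fun p => |k p|) := by
      unfold J
      rw [← intervalIntegral.integral_const_mul]
      apply intervalIntegral.integral_mono_on (by norm_num) (hη'c.abs.intervalIntegrable _ _)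
      · exact (continuous_const.mul (cont_inner a b hkc.abs)).intervalIntegrable _ _
      · intro s _; exact hηabs s
    have h2 := J_mono a b hkc.abs (by fun_prop) hkabs
    rw [J_mul] at h2
    have h3 : b * ∫ s in (0:ℝ)..1, |η' s| ≤ Real.pi ^ 2 := by
      have h4 := mul_le_mul_of_nonneg_left h1 hbpos.le
      have h5 := mul_le_mul_of_nonneg_left h2 (by positivity : 0 ≤ 2 * b ^ 2)
      nlinarith
    by_contra! h6
    have := mul_lt_mul_of_pos_left h6 hbpos
    nlinarith
  obtain ⟨c, hcc, hc0, hc1, hcI⟩ := choose_cutoff η η' hηd hη'c hηp hηp' hmean hvar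
  -- pointwise
  have hpt : ∀ p (c : ℝ), 0 ≤ c → (1 - c ^ 2) * T p + 12 / 5 * c * b * |k p| ≤ T p + 36 / 25 * e p := by
    intro p c hc
    have hTe : (b * k p) ^ 2 ≤ e p * T p := by
      simp only [hT]
      nlinarith [mul_le_mul_of_nonneg_left (hcs p) (sq_nonneg b), sq_nonneg (a * e p + b * r p)]
    have hT0 : 0 ≤ T p := by
      rcases (he0 p).eq_or_lt with h | h
      · have h0 := hcs p
        rw [← h] at h0
        have : r p = 0 := by nlinarith [sq_nonneg (r p), sq_nonneg (k p)]
        simp only [hT, ← h, this]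
        have := hg0 p
        simp; positivity
      · by_contra! h2
        nlinarith [mul_pos h (neg_pos.2 h2), sq_nonneg (b * k p)]
    have hamgm : |b * k p * (6 / 5 * c)| ≤ (c ^ 2 * T p + 36 / 25 * e p) / 2 := by
      have := he0 p
      apply abs_le_of_sq_le_sq _ (by positivity)
      rw [mul_pow]
      have h7 := mul_le_mul_of_nonneg_right hTe (sq_nonneg (6 / 5 * c))
      nlinarith [sq_nonneg (c ^ 2 * T p - 36 / 25 * e p)]
    rw [abs_mul, abs_mul, abs_of_pos hbpos, abs_of_nonneg (by positivity : 0 ≤ 6 / 5 * c)] at hamgm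
    linarith
  have hs : ∀ s, Real.pi ^ 2 - (η s ^ 2 + Real.pi ^ 2 * c s ^ 2) + 6 / 5 * (c s * |η' s|) ≤
      ∫ t in (0:ℝ)..1, (T (s + t * a, t * b) + 36 / 25 * e (s + t * a, t * b)) := by
    intro s
    have h1 : ∫ t in (0:ℝ)..1, ((1 - c s ^ 2) * T (s + t * a, t * b) +
        12 / 5 * c s * b * |k (s + t * a, t * b)|) ≤
        ∫ t in (0:ℝ)..1, (T (s + t * a, t * b) + 36 / 25 * e (s + t * a, t * b)) := by
      apply intervalIntegral.integral_mono_on (by norm_num)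
      · apply Continuous.intervalIntegrable; fun_prop
      · apply Continuous.intervalIntegrable; fun_prop
      · intro t _; exact hpt _ _ (hc0 s)
    rw [intervalIntegral.integral_add (by apply Continuous.intervalIntegrable; fun_prop)
      (by apply Continuous.intervalIntegrable; fun_prop), intervalIntegral.integral_const_mul,
      intervalIntegral.integral_const_mul] at h1
    refine le_trans ?_ h1
    have h2 := hline s
    change Real.pi ^ 2 - η s ^ 2 ≤ ∫ t in (0:ℝ)..1, T (s + t * a, t * b) at h2
    have h3 : 0 ≤ 1 - c s ^ 2 := by nlinarith [hc0 s, hc1 s]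
    have h4 := mul_le_mul_of_nonneg_left h2 h3
    have h5 := mul_le_mul_of_nonneg_left (hηabs s) (hc0 s)
    nlinarith [mul_nonneg (sq_nonneg (c s)) (sq_nonneg (η s))]
  have hηc : Continuous η := continuous_iff_continuousAt.2 fun t => (hηd t).continuousAt
  have htot : Real.pi ^ 2 ≤ J a b (fun p => T p + 36 / 25 * e p) := by
    have h1 : ∫ s in (0:ℝ)..1, (Real.pi ^ 2 - (η s ^ 2 + Real.pi ^ 2 * c s ^ 2) +
        6 / 5 * (c s * |η' s|)) ≤ J a b (fun p => T p + 36 / 25 * e p) := by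
      unfold J
      apply intervalIntegral.integral_mono_on (by norm_num)
      · apply Continuous.intervalIntegrable; fun_prop
      · exact (cont_inner a b (f := fun p => T p + 36 / 25 * e p) (by fun_prop)).intervalIntegrable _ _
      · intro s _; exact hs s
    rw [intervalIntegral.integral_add (by apply Continuous.intervalIntegrable; fun_prop)
      (by apply Continuous.intervalIntegrable; fun_prop),
      intervalIntegral.integral_sub (by apply Continuous.intervalIntegrable; fun_prop)
      (by apply Continuous.intervalIntegrable; fun_prop)] at h1
    simp only [intervalIntegral.integral_const, sub_zero, one_smul] at h1
    linarith
  rw [J_add a b hTc (by fun_prop), J_mul] at htot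
  have hJT : J a b T = a ^ 2 * J a b e + 2 * a * b * J a b r + b ^ 2 * J a b g := by
    simp only [hT]
    rw [J_add a b (f := fun p => a ^ 2 * e p + 2 * a * b * r p) (by fun_prop) (by fun_prop),
      J_add a b (by fun_prop) (by fun_prop), J_mul, J_mul, J_mul]
  rw [J_add a b hec hgc] at hcon
  have hJe : 0 ≤ J a b e := by
    have := J_mono a b continuous_const hec he0
    have h0 : J a b (fun _ => 0) = 0 := by simp [J]
    rwa [h0] at this
  have hb2 : 36 / 25 ≤ b ^ 2 - 1 := by nlinarith
  have h8 := mul_nonneg (sub_nonneg.2 hb2) hJe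
  have h9 := mul_nonneg (sub_nonneg.2 ha) hJe
  have h10 := mul_nonneg hbpos.le (neg_nonneg.2 hsign)
  nlinarith

theorem scalar_core (a b : ℝ) (hb : Real.pi / 2 < b)
    (ha : |a| ≤ 1 / 2)
    (e g r k : ℝ × ℝ → ℝ) (hec : Continuous e) (hgc : Continuous g) (hrc : Continuous r)
    (hkc : Continuous k) (he : Per a b e) (hg : Per a b g) (hr : Per a b r) (hk : Per a b k)
    (he0 : ∀ p, 0 ≤ e p) (hg0 : ∀ p, 0 ≤ g p) (hcs : ∀ p, r p ^ 2 + k p ^ 2 ≤ e p * g p)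
    (L : ℝ × ℝ → ℝ) (hL : ContDiff ℝ 2 L) (hLp : Per a b L)
    (hLap : ∀ p, pX (pX L) p + pY (pY L) p = 4 * k p)
    (hline : ∀ n : ℤ, ∀ a' : ℝ, a' = a + n → ∀ s, Real.pi ^ 2 -
        (∫ t in (0:ℝ)..1, (b * pX L (s + t * a', t * b) - a' * pY L (s + t * a', t * b)) / 2) ^ 2 ≤
        ∫ t in (0:ℝ)..1, (a' ^ 2 * e (s + t * a', t * b) + 2 * a' * b * r (s + t * a', t * b)
          + b ^ 2 * g (s + t * a', t * b))) :
    Real.pi ^ 2 ≤ b ^ 2 * J a b (fun p => e p + g p - 2 * k p) := by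
  have hkJ : J a b k = 0 := by
    have hLX1 : ContDiff ℝ 1 (pX L) := by exact_mod_cast contDiff_pX (n := 1) (by exact_mod_cast hL)
    have hLY1 : ContDiff ℝ 1 (pY L) := by exact_mod_cast contDiff_pY (n := 1) (by exact_mod_cast hL)
    have hLXXc := cont_pX hLX1
    have hLXYc := cont_pX hLY1
    have hLYYc := cont_pY hLY1
    have hb0 : b ≠ 0 := by have := Real.pi_pos; intro h; linarith
    have hx : ∀ {f : ℝ × ℝ → ℝ}, ContDiff ℝ 1 f → Per a b f → J a b (pX f) = 0 := by
      intro f hf hp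
      unfold J
      rw [intervalIntegral.integral_eq_sub_of_hasDerivAt (fun s _ => deriv_inner a b hf s)
        ((cont_inner a b (cont_pX hf)).intervalIntegrable _ _)]
      have : ∀ t, f (1 + t * a, t * b) = f (0 + t * a, t * b) := by
        intro t; rw [← hp.1 (0 + t * a, t * b)]; congr 2; ring
      simp only [this, sub_self]
    have hy : J a b (pY (pY L)) = 0 := by
      have h1 : J a b (pX (pY L)) = 0 := hx hLY1 hLp.pY
      have h2 : J a b (fun p => a * pX (pY L) p + b * pY (pY L) p) = 0 := by
        unfold J
        have : ∀ s : ℝ, ∫ t in (0:ℝ)..1, (a * pX (pY L) (s + t * a, t * b) +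
            b * pY (pY L) (s + t * a, t * b)) = 0 := by
          intro s
          refine Eq.trans ?_ (line_integral_zero hLY1 hLp.pY s)
          rw [intervalIntegral.integral_add,
            intervalIntegral.integral_const_mul, intervalIntegral.integral_const_mul]
          all_goals apply Continuous.intervalIntegrable; fun_prop
        simp [this]
      rw [J_add a b (by fun_prop) (by fun_prop), J_mul, J_mul, h1] at h2
      simpa [hb0] using h2
    have h3 : J a b (fun p => 4 * k p) = 0 := by
      simp_rw [← hLap]
      rw [J_add a b hLXXc hLYYc, hy, hx hLX1 hLp.pX, add_zero]
    rw [J_mul] at h3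
    linarith
  have e1 : J a b (fun p => e p + g p - 2 * k p) = J a b (fun p => e p + g p) := by
    have : (fun p => e p + g p - 2 * k p) = fun p => (e p + g p) + (-2) * k p := by
      ext p; ring
    rw [this, J_add a b (by fun_prop) (by fun_prop), J_mul, hkJ]; ring
  rw [e1]
  have main : ∀ n : ℤ, (a + n) ^ 2 ≤ 1 → (a + n) * J a b r ≤ 0 →
      Real.pi ^ 2 ≤ b ^ 2 * J a b (fun p => e p + g p) := by
    intro n h1 h2
    rw [J_indep a (a + n) b hrc hr.1] at h2
    rw [J_indep a (a + n) b (by fun_prop) (fun p => by simp only [he.1, hg.1])]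
    exact scalar_core_aux (a + n) b hb h1 e g r k hec hgc hrc hkc (hk.int n) he0 hg0 hcs L hL
      (hLp.int n) hLap (hline n _ rfl) h2
  obtain ⟨h1, h2⟩ := abs_le.1 ha
  rcases le_total 0 (J a b r) with hJ | hJ
  · rcases le_total a 0 with h | h
    · exact main 0 (by push_cast; nlinarith) (by push_cast; nlinarith)
    · exact main (-1) (by push_cast; nlinarith) (by push_cast; nlinarith)
  · rcases le_total a 0 with h | h
    · exact main 1 (by push_cast; nlinarith) (by push_cast; nlinarith)
    · exact main 0 (by push_cast; nlinarith) (by push_cast; nlinarith)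

end

section

section vec
variable {V : Type*} [NormedAddCommGroup V] [InnerProductSpace ℂ V]

lemma pX_inner {A B : ℝ × ℝ → V} (hA : Differentiable ℝ A) (hB : Differentiable ℝ B) (p : ℝ × ℝ) :
    pX (fun p => inner ℂ (A p) (B p)) p = inner ℂ (A p) (pX B p) + inner ℂ (pX A p) (B p) := by
  unfold pX
  rw [fderiv_inner_apply ℂ (hA p) (hB p)]

lemma pY_inner {A B : ℝ × ℝ → V} (hA : Differentiable ℝ A) (hB : Differentiable ℝ B) (p : ℝ × ℝ) :
    pY (fun p => inner ℂ (A p) (B p)) p = inner ℂ (A p) (pY B p) + inner ℂ (pY A p) (B p) := by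
  unfold pY
  rw [fderiv_inner_apply ℂ (hA p) (hB p)]

lemma fd_re {f : ℝ × ℝ → ℂ} (hf : Differentiable ℝ f) (p v : ℝ × ℝ) :
    fderiv ℝ (fun p => (f p).re) p v = (fderiv ℝ f p v).re := by
  have h := (Complex.reCLM.hasFDerivAt (x := f p)).comp p (hf p).hasFDerivAt
  have h2 : fderiv ℝ (fun p => (f p).re) p = _ := h.fderiv
  rw [h2]; rfl

lemma fd_div {f g : ℝ × ℝ → ℝ} (hf : Differentiable ℝ f) (hg : Differentiable ℝ g)
    (h0 : ∀ p, g p ≠ 0) (p v : ℝ × ℝ) :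
    fderiv ℝ (fun p => f p / g p) p v
      = (fderiv ℝ f p v * g p - f p * fderiv ℝ g p v) / (g p) ^ 2 := by
  have hl : HasDerivAt (fun t : ℝ => p + t • v) v 0 := by
    simpa using ((hasDerivAt_id (0:ℝ)).smul_const v).const_add p
  have key : ∀ {h : ℝ × ℝ → ℝ}, Differentiable ℝ h →
      HasDerivAt (fun t : ℝ => h (p + t • v)) (fderiv ℝ h p v) 0 := by
    intro h hh
    have h1 : HasFDerivAt h (fderiv ℝ h p) (p + (0:ℝ) • v) := by
      simpa using (hh p).hasFDerivAt
    exact h1.comp_hasDerivAt 0 hl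
  have hq : Differentiable ℝ (fun p => f p / g p) := by
    intro p; simp only [div_eq_mul_inv]; exact (hf p).mul ((hg p).inv (h0 p))
  have h1 := key hq
  have h2 := (key hf).div (key hg) (h0 _)
  have := h1.unique h2
  simpa using this

lemma pX_pY_comm {Z : ℝ × ℝ → V} (hZ : ContDiff ℝ 2 Z) (p : ℝ × ℝ) :
    pX (pY Z) p = pY (pX Z) p := by
  have hs : IsSymmSndFDerivAt ℝ Z p := (hZ.contDiffAt).isSymmSndFDerivAt (by simp)
  have hd : Differentiable ℝ (fderiv ℝ Z) :=
    (hZ.fderiv_right (m := 1) (by norm_num)).differentiable (by norm_num)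
  have e : ∀ v w, fderiv ℝ (fun q => fderiv ℝ Z q w) p v = fderiv ℝ (fderiv ℝ Z) p v w := by
    intro v w
    rw [fderiv_clm_apply (hd p) (by fun_prop)]
    simp
  show fderiv ℝ (fun q => fderiv ℝ Z q (0,1)) p (1,0) = fderiv ℝ (fun q => fderiv ℝ Z q (1,0)) p (0,1)
  rw [e, e]
  exact hs _ _


variable {Z : ℝ × ℝ → V}

/-- pointwise algebra -/
lemma alg_point (z x y : V) (hz : z ≠ 0)
    (ho : inner ℂ z (x + Complex.I • y) = 0) :
    inner ℂ z y = Complex.I * inner ℂ z x := by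
  rw [inner_add_right, inner_smul_right] at ho
  linear_combination (-Complex.I) * ho + (inner ℂ z y) * Complex.I_sq

lemma norm_W (x y : V) :
    ‖x + Complex.I • y‖ ^ 2 = ‖x‖ ^ 2 + ‖y‖ ^ 2 - 2 * (inner ℂ x y).im := by
  rw [norm_add_sq (𝕜 := ℂ), inner_smul_right, norm_smul]
  simp
  ring

lemma norm_t (x y : V) (u v : ℝ) :
    ‖u • x + v • y‖ ^ 2 = u ^ 2 * ‖x‖ ^ 2 + v ^ 2 * ‖y‖ ^ 2 + 2 * u * v * (inner ℂ x y).re := by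
  have h1 : ∀ (u : ℝ) (x : V), u • x = (u : ℂ) • x := fun u x => (Complex.coe_smul u x).symm
  rw [norm_add_sq (𝕜 := ℂ), h1, h1, inner_smul_right, inner_smul_left, norm_smul, norm_smul, mul_pow, mul_pow]
  simp
  ring

lemma cs_point (z x y : V) (hz : z ≠ 0)
    (ho : inner ℂ z (x + Complex.I • y) = 0) :
    ((inner ℂ x y).re / ‖z‖ ^ 2) ^ 2
      + ((inner ℂ x y).im / ‖z‖ ^ 2 - ‖inner ℂ z x‖ ^ 2 / (‖z‖ ^ 2) ^ 2) ^ 2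
    ≤ (‖x‖ ^ 2 / ‖z‖ ^ 2 - ‖inner ℂ z x‖ ^ 2 / (‖z‖ ^ 2) ^ 2)
      * (‖y‖ ^ 2 / ‖z‖ ^ 2 - ‖inner ℂ z x‖ ^ 2 / (‖z‖ ^ 2) ^ 2) ∧
    0 ≤ (‖x‖ ^ 2 / ‖z‖ ^ 2 - ‖inner ℂ z x‖ ^ 2 / (‖z‖ ^ 2) ^ 2) ∧
    0 ≤ (‖y‖ ^ 2 / ‖z‖ ^ 2 - ‖inner ℂ z x‖ ^ 2 / (‖z‖ ^ 2) ^ 2) := by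
  have hβ := alg_point z x y hz ho
  have hR : 0 < ‖z‖ ^ 2 := by positivity
  have hzz : inner ℂ z z = ((‖z‖ ^ 2 : ℝ) : ℂ) := by
    rw [inner_self_eq_norm_sq_to_K]; push_cast; rfl
  have hxz : inner ℂ x z = starRingEnd ℂ (inner ℂ z x) := (inner_conj_symm x z).symm
  have hyz : inner ℂ y z = starRingEnd ℂ (inner ℂ z y) := (inner_conj_symm y z).symm
  set α := inner ℂ z x with hα
  set R := ‖z‖ ^ 2 with hRdef
  have hRc : (R : ℂ) ≠ 0 := by exact_mod_cast hR.ne'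
  have hN : starRingEnd ℂ α * α = ((‖α‖ ^ 2 : ℝ) : ℂ) := by
    rw [← Complex.normSq_eq_conj_mul_self, Complex.normSq_eq_norm_sq]
  have hnorm : ∀ w : V, inner ℂ w w = ((‖w‖ ^ 2 : ℝ) : ℂ) := by
    intro w; rw [inner_self_eq_norm_sq_to_K]; push_cast; rfl
  set X := x - (α / R) • z with hX
  set Y := y - (inner ℂ z y / R) • z with hY
  have hXX : ‖X‖ ^ 2 = ‖x‖ ^ 2 - ‖α‖ ^ 2 / R := by
    have : ((‖X‖ ^ 2 : ℝ) : ℂ) = ((‖x‖ ^ 2 - ‖α‖ ^ 2 / R : ℝ) : ℂ) := by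
      rw [← hnorm, hX, inner_sub_left, inner_sub_right, inner_sub_right, inner_smul_left,
        inner_smul_right, inner_smul_right, inner_smul_left, hxz, hzz, hnorm x, ← hα]
      rw [Complex.ofReal_sub, Complex.ofReal_div, ← hN]
      simp only [map_div₀, Complex.conj_ofReal]
      field_simp
      ring
    exact_mod_cast this
  have hYY : ‖Y‖ ^ 2 = ‖y‖ ^ 2 - ‖α‖ ^ 2 / R := by
    have : ((‖Y‖ ^ 2 : ℝ) : ℂ) = ((‖y‖ ^ 2 - ‖α‖ ^ 2 / R : ℝ) : ℂ) := by
      rw [← hnorm, hY, inner_sub_left, inner_sub_right, inner_sub_right, inner_smul_left,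
        inner_smul_right, inner_smul_right, inner_smul_left, hyz, hzz, hnorm y, hβ]
      rw [Complex.ofReal_sub, Complex.ofReal_div, ← hN]
      simp only [map_div₀, Complex.conj_ofReal, map_mul, Complex.conj_I]
      field_simp
      linear_combination (starRingEnd ℂ α * α) * Complex.I_sq
    exact_mod_cast this
  have hXY : inner ℂ X Y = inner ℂ x y - Complex.I * ((‖α‖ ^ 2 / R : ℝ) : ℂ) := by
    rw [hX, hY, inner_sub_left, inner_sub_right, inner_sub_right, inner_smul_left,
        inner_smul_right, inner_smul_right, inner_smul_left, hxz, hzz, hβ]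
    rw [Complex.ofReal_div, ← hN]
    simp only [map_div₀, Complex.conj_ofReal]
    field_simp
    ring
  have hcs := norm_inner_le_norm (𝕜 := ℂ) X Y
  have hcs2 : ‖inner ℂ X Y‖ ^ 2 ≤ ‖X‖ ^ 2 * ‖Y‖ ^ 2 := by
    rw [← mul_pow]; exact pow_le_pow_left₀ (norm_nonneg _) hcs 2
  have hre : (inner ℂ X Y).re = (inner ℂ x y).re := by
    rw [hXY, Complex.sub_re, Complex.re_mul_ofReal]; simp
  have him : (inner ℂ X Y).im = (inner ℂ x y).im - ‖α‖ ^ 2 / R := by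
    rw [hXY, Complex.sub_im, Complex.im_mul_ofReal]; simp
  rw [← Complex.normSq_eq_norm_sq, Complex.normSq_apply, hre, him] at hcs2
  have e1 : ‖x‖ ^ 2 / R - ‖α‖ ^ 2 / R ^ 2 = ‖X‖ ^ 2 / R := by rw [hXX]; field_simp
  have e2 : ‖y‖ ^ 2 / R - ‖α‖ ^ 2 / R ^ 2 = ‖Y‖ ^ 2 / R := by rw [hYY]; field_simp
  have e3 : (inner ℂ x y).im / R - ‖α‖ ^ 2 / R ^ 2 = ((inner ℂ x y).im - ‖α‖ ^ 2 / R) / R := by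
    field_simp
  rw [e1, e2, e3]
  refine ⟨?_, by positivity, by positivity⟩
  rw [div_pow, div_pow, ← add_div, div_mul_div_comm, ← sq]
  apply div_le_div_of_nonneg_right _ (by positivity)
  linarith

/-- Laplacian identity. -/
lemma lap_log (hZ : ContDiff ℝ 2 Z) (h0 : ∀ p, Z p ≠ 0)
    (ho : ∀ p, inner ℂ (Z p) (pX Z p + Complex.I • pY Z p) = 0) :
    (∀ p, pX (fun p => Real.log (‖Z p‖ ^ 2)) p = 2 * (inner ℂ (Z p) (pX Z p)).re / ‖Z p‖ ^ 2) ∧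
    (∀ p, pY (fun p => Real.log (‖Z p‖ ^ 2)) p = 2 * (inner ℂ (Z p) (pY Z p)).re / ‖Z p‖ ^ 2) ∧
    (∀ p, pX (pX (fun p => Real.log (‖Z p‖ ^ 2))) p + pY (pY (fun p => Real.log (‖Z p‖ ^ 2))) p
      = 4 * ((inner ℂ (pX Z p) (pY Z p)).im / ‖Z p‖ ^ 2
          - ‖inner ℂ (Z p) (pX Z p)‖ ^ 2 / (‖Z p‖ ^ 2) ^ 2)) := by
  have hd : Differentiable ℝ Z := hZ.differentiable (by norm_num)
  have hX1 : ContDiff ℝ 1 (pX Z) := by exact_mod_cast contDiff_pX (n := 1) (by exact_mod_cast hZ)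
  have hY1 : ContDiff ℝ 1 (pY Z) := by exact_mod_cast contDiff_pY (n := 1) (by exact_mod_cast hZ)
  have hXd : Differentiable ℝ (pX Z) := hX1.differentiable (by norm_num)
  have hYd : Differentiable ℝ (pY Z) := hY1.differentiable (by norm_num)
  have hnorm : ∀ w : V, inner ℂ w w = ((‖w‖ ^ 2 : ℝ) : ℂ) := by
    intro w; rw [inner_self_eq_norm_sq_to_K]; push_cast; rfl
  have hRe : (fun p => ‖Z p‖ ^ 2) = fun p => (inner ℂ (Z p) (Z p)).re := by
    ext p; rw [hnorm, Complex.ofReal_re]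
  have hRd : Differentiable ℝ (fun p => ‖Z p‖ ^ 2) := hd.norm_sq ℂ
  have hR0 : ∀ p, ‖Z p‖ ^ 2 ≠ 0 := fun p => by have := h0 p; positivity
  have hRX : ∀ p, fderiv ℝ (fun p => ‖Z p‖ ^ 2) p (1, 0) = 2 * (inner ℂ (Z p) (pX Z p)).re := by
    intro p
    have h := pX_inner hd hd p
    unfold pX at h
    rw [hRe, fd_re (hd.inner ℂ hd), h, Complex.add_re, ← inner_conj_symm (fderiv ℝ Z p (1,0)) (Z p), Complex.conj_re]
    unfold pX; ring
  have hRY : ∀ p, fderiv ℝ (fun p => ‖Z p‖ ^ 2) p (0, 1) = 2 * (inner ℂ (Z p) (pY Z p)).re := by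
    intro p
    have h := pY_inner hd hd p
    unfold pY at h
    rw [hRe, fd_re (hd.inner ℂ hd), h, Complex.add_re, ← inner_conj_symm (fderiv ℝ Z p (0,1)) (Z p), Complex.conj_re]
    unfold pY; ring
  have hlog : ∀ p v, fderiv ℝ (fun p => Real.log (‖Z p‖ ^ 2)) p v =
      fderiv ℝ (fun p => ‖Z p‖ ^ 2) p v / ‖Z p‖ ^ 2 := by
    intro p v
    rw [fderiv.log (hRd p) (hR0 p)]
    simp [div_eq_inv_mul]
  have hLX : ∀ p, pX (fun p => Real.log (‖Z p‖ ^ 2)) p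
      = 2 * (inner ℂ (Z p) (pX Z p)).re / ‖Z p‖ ^ 2 := by
    intro p; rw [← hRX, ← hlog]; rfl
  have hLY : ∀ p, pY (fun p => Real.log (‖Z p‖ ^ 2)) p
      = 2 * (inner ℂ (Z p) (pY Z p)).re / ‖Z p‖ ^ 2 := by
    intro p; rw [← hRY, ← hlog]; rfl
  refine ⟨hLX, hLY, ?_⟩
  intro p
  have e2 : ∀ (f : ℝ × ℝ → ℂ), Differentiable ℝ f → ∀ q v,
      fderiv ℝ (fun q => 2 * (f q).re) q v = 2 * (fderiv ℝ f q v).re := by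
    intro f hf q v
    have hr : DifferentiableAt ℝ (fun q => (f q).re) q :=
      (Complex.reCLM.differentiable.comp hf) q
    rw [fderiv_const_mul hr]
    simp [fd_re hf]
  have hre2 : ∀ (f : ℝ × ℝ → ℂ), Differentiable ℝ f → Differentiable ℝ (fun q => 2 * (f q).re) := by
    intro f hf
    exact (Complex.reCLM.differentiable.comp hf).const_mul 2
  have hαd := hd.inner ℂ hXd
  have hβd := hd.inner ℂ hYd
  have h1 : pX (pX (fun p => Real.log (‖Z p‖ ^ 2))) p =
      (2 * (inner ℂ (Z p) (pX (pX Z) p) + inner ℂ (pX Z p) (pX Z p)).re * ‖Z p‖ ^ 2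
        - 2 * (inner ℂ (Z p) (pX Z p)).re * (2 * (inner ℂ (Z p) (pX Z p)).re)) / (‖Z p‖ ^ 2) ^ 2 := by
    rw [funext hLX]
    have := fd_div (hre2 _ hαd) hRd hR0 p (1, 0)
    rw [hRX, e2 _ hαd] at this
    rw [← pX_inner hd hXd]
    exact this
  have h2 : pY (pY (fun p => Real.log (‖Z p‖ ^ 2))) p =
      (2 * (inner ℂ (Z p) (pY (pY Z) p) + inner ℂ (pY Z p) (pY Z p)).re * ‖Z p‖ ^ 2
        - 2 * (inner ℂ (Z p) (pY Z p)).re * (2 * (inner ℂ (Z p) (pY Z p)).re)) / (‖Z p‖ ^ 2) ^ 2 := by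
    rw [funext hLY]
    have := fd_div (hre2 _ hβd) hRd hR0 p (0, 1)
    rw [hRY, e2 _ hβd] at this
    rw [← pY_inner hd hYd]
    exact this
  have hβ := alg_point _ _ _ (h0 p) (ho p)
  -- differentiate the orthogonality
  have hbd : (fun p => inner ℂ (Z p) (pX Z p) + Complex.I * inner ℂ (Z p) (pY Z p)) = fun _ => 0 := by
    ext q; rw [← ho q, inner_add_right, inner_smul_right]
  have key : ∀ q v, fderiv ℝ (fun p => inner ℂ (Z p) (pX Z p)) q v
      + Complex.I * fderiv ℝ (fun p => inner ℂ (Z p) (pY Z p)) q v = 0 := by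
    intro q v
    have := congrArg (fun f => fderiv ℝ f q v) hbd
    rw [fderiv_fun_add (hαd q) ((hβd q).const_mul _), fderiv_const_mul (hβd q)] at this
    simpa using this
  have k1 : inner ℂ (Z p) (pX (pX Z) p) + inner ℂ (pX Z p) (pX Z p)
      + Complex.I * (inner ℂ (Z p) (pX (pY Z) p) + inner ℂ (pX Z p) (pY Z p)) = 0 := by
    rw [← pX_inner hd hXd, ← pX_inner hd hYd]; exact key p (1, 0)
  have k2 : inner ℂ (Z p) (pY (pX Z) p) + inner ℂ (pY Z p) (pX Z p)
      + Complex.I * (inner ℂ (Z p) (pY (pY Z) p) + inner ℂ (pY Z p) (pY Z p)) = 0 := by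
    rw [← pY_inner hd hXd, ← pY_inner hd hYd]; exact key p (0, 1)
  rw [pX_pY_comm hZ] at k1
  rw [h1, h2]
  have hyx : inner ℂ (pY Z p) (pX Z p) = starRingEnd ℂ (inner ℂ (pX Z p) (pY Z p)) :=
    (inner_conj_symm _ _).symm
  rw [hyx, hnorm] at k2
  rw [hnorm] at k1
  rw [hβ, hnorm, hnorm]
  have hR := hR0 p
  generalize ‖Z p‖ ^ 2 = R at *
  have hN : ‖inner ℂ (Z p) (pX Z p)‖ ^ 2 = (inner ℂ (Z p) (pX Z p)).re ^ 2 + (inner ℂ (Z p) (pX Z p)).im ^ 2 := by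
    rw [← Complex.normSq_eq_norm_sq, Complex.normSq_apply]; ring
  rw [hN]
  have k1r := congrArg Complex.re k1
  have k2i := congrArg Complex.im k2
  simp only [Complex.add_re, Complex.add_im, Complex.ofReal_re, Complex.ofReal_im, Complex.mul_re, Complex.mul_im,
    Complex.I_re, Complex.I_im, Complex.conj_im, Complex.zero_re, Complex.zero_im] at k1r k2i
  simp only [Complex.add_re, Complex.ofReal_re, Complex.mul_re, Complex.I_re, Complex.I_im]
  field_simp
  linear_combination 2 * R * k1r + 2 * R * k2i


lemma anti_pX {a b : ℝ} (h2 : ∀ p : ℝ × ℝ, Z (p.1 + a, p.2 + b) = - Z p) (p : ℝ × ℝ) :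
    pX Z (p.1 + a, p.2 + b) = - pX Z p := by
  have h : (fun q : ℝ × ℝ => Z (q + (a, b))) = fun q => - Z q := by ext q; exact h2 q
  have h3 : fderiv ℝ (fun q : ℝ × ℝ => Z (q + (a, b))) p (1, 0) = - fderiv ℝ Z p (1, 0) := by
    rw [h, fderiv_fun_neg]; rfl
  rw [fderiv_comp_add_right] at h3
  exact h3

lemma anti_pY {a b : ℝ} (h2 : ∀ p : ℝ × ℝ, Z (p.1 + a, p.2 + b) = - Z p) (p : ℝ × ℝ) :
    pY Z (p.1 + a, p.2 + b) = - pY Z p := by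
  have h : (fun q : ℝ × ℝ => Z (q + (a, b))) = fun q => - Z q := by ext q; exact h2 q
  have h3 : fderiv ℝ (fun q : ℝ × ℝ => Z (q + (a, b))) p (0, 1) = - fderiv ℝ Z p (0, 1) := by
    rw [h, fderiv_fun_neg]; rfl
  rw [fderiv_comp_add_right] at h3
  exact h3

theorem nonvanishing_bound (a b : ℝ) (hb : Real.pi / 2 < b) (ha : |a| ≤ 1 / 2)
    (hZ : ContDiff ℝ 2 Z) (h0 : ∀ p, Z p ≠ 0)
    (hp1 : ∀ p : ℝ × ℝ, Z (p.1 + 1, p.2) = Z p)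
    (hp2 : ∀ p : ℝ × ℝ, Z (p.1 + a, p.2 + b) = - Z p)
    (ho : ∀ p, inner ℂ (Z p) (pX Z p + Complex.I • pY Z p) = 0) :
    Real.pi ^ 2 ≤ b ^ 2 * J a b (fun p => ‖pX Z p + Complex.I • pY Z p‖ ^ 2 / ‖Z p‖ ^ 2) := by
  obtain ⟨hLX, hLY, hLap⟩ := lap_log hZ h0 ho
  have hd : Differentiable ℝ Z := hZ.differentiable (by norm_num)
  have hX1 : ContDiff ℝ 1 (pX Z) := by exact_mod_cast contDiff_pX (n := 1) (by exact_mod_cast hZ)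
  have hY1 : ContDiff ℝ 1 (pY Z) := by exact_mod_cast contDiff_pY (n := 1) (by exact_mod_cast hZ)
  have hXc := hX1.continuous
  have hYc := hY1.continuous
  have hZc := hZ.continuous
  have hR0 : ∀ p, ‖Z p‖ ^ 2 ≠ 0 := fun p => by have := h0 p; positivity
  have hR1 : ∀ p, (‖Z p‖ ^ 2) ^ 2 ≠ 0 := fun p => by have := h0 p; positivity
  have hRc : Continuous fun p => ‖Z p‖ ^ 2 := by fun_prop
  have hαc : Continuous fun p => ‖inner ℂ (Z p) (pX Z p)‖ ^ 2 := (hZc.inner hXc).norm.pow 2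
  have hcc : Continuous fun p => inner ℂ (pX Z p) (pY Z p) := hXc.inner hYc
  have hNc : Continuous fun p => ‖inner ℂ (Z p) (pX Z p)‖ ^ 2 / (‖Z p‖ ^ 2) ^ 2 :=
    hαc.div (hRc.pow 2) hR1
  have pX1 : ∀ p : ℝ × ℝ, pX Z (p.1 + 1, p.2) = pX Z p := by
    intro p
    simpa using pX_shift (f := Z) (u := 1) (v := 0) (fun p => by simpa using hp1 p) p
  have pY1 : ∀ p : ℝ × ℝ, pY Z (p.1 + 1, p.2) = pY Z p := by
    intro p
    simpa using pY_shift (f := Z) (u := 1) (v := 0) (fun p => by simpa using hp1 p) p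
  have pX2 := anti_pX hp2
  have pY2 := anti_pY hp2
  have hcs := fun p => cs_point _ _ _ (h0 p) (ho p)
  have main := scalar_core a b hb ha
    (fun p => ‖pX Z p‖ ^ 2 / ‖Z p‖ ^ 2 - ‖inner ℂ (Z p) (pX Z p)‖ ^ 2 / (‖Z p‖ ^ 2) ^ 2)
    (fun p => ‖pY Z p‖ ^ 2 / ‖Z p‖ ^ 2 - ‖inner ℂ (Z p) (pX Z p)‖ ^ 2 / (‖Z p‖ ^ 2) ^ 2)
    (fun p => (inner ℂ (pX Z p) (pY Z p)).re / ‖Z p‖ ^ 2)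
    (fun p => (inner ℂ (pX Z p) (pY Z p)).im / ‖Z p‖ ^ 2
          - ‖inner ℂ (Z p) (pX Z p)‖ ^ 2 / (‖Z p‖ ^ 2) ^ 2)
    (((hXc.norm.pow 2).div hRc hR0).sub hNc)
    (((hYc.norm.pow 2).div hRc hR0).sub hNc)
    ((Complex.continuous_re.comp hcc).div hRc hR0)
    (((Complex.continuous_im.comp hcc).div hRc hR0).sub hNc)
    ⟨fun p => by simp only [hp1, pX1], fun p => by simp only [hp2, pX2, inner_neg_neg, norm_neg]⟩
    ⟨fun p => by simp only [hp1, pX1, pY1],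
      fun p => by simp only [hp2, pX2, pY2, inner_neg_neg, norm_neg]⟩
    ⟨fun p => by simp only [hp1, pX1, pY1],
      fun p => by simp only [hp2, pX2, pY2, inner_neg_neg, norm_neg]⟩
    ⟨fun p => by simp only [hp1, pX1, pY1],
      fun p => by simp only [hp2, pX2, pY2, inner_neg_neg, norm_neg]⟩
    (fun p => (hcs p).2.1) (fun p => (hcs p).2.2) (fun p => (hcs p).1)
    (fun p => Real.log (‖Z p‖ ^ 2)) ((hZ.norm_sq ℂ).log hR0)
    ⟨fun p => by simp only [hp1], fun p => by simp only [hp2, norm_neg]⟩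
    hLap ?_
  · convert main using 4 with p
    rw [norm_W]; ring
  · intro n a' ha' s
    have hl := fun t => hasDerivAt_line hd s a' b t
    have hanti : Z (s + 1 * a', 1 * b) = - Z (s + 0 * a', 0 * b) := by
      have hper : Function.Periodic (fun x => Z (x + a, b)) 1 := by
        intro x
        have := hp1 (x + a, b)
        simp only at this ⊢
        rw [← this]; congr 2; ring
      have h1 := hper.int_mul n s
      have h2 := hp2 (s, 0)
      simp only [mul_one, zero_add] at h1 h2
      rw [zero_mul, zero_mul, add_zero, one_mul, one_mul, ← h2, ← h1, ha']
      congr 2; ring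
    have hb' := line_bound _ _ hl (by fun_prop) (fun t => h0 _) hanti
    have hβ := fun p => alg_point _ _ _ (h0 p) (ho p)
    have h1 : ∀ (u : ℝ) (x : V), u • x = (u : ℂ) • x := fun u x => (Complex.coe_smul u x).symm
    convert hb' using 2
    · congr 1
      apply intervalIntegral.integral_congr
      intro t _
      simp only
      rw [hLX, hLY, hβ, inner_add_right, h1, h1, inner_smul_right, inner_smul_right, hβ]
      simp only [Complex.add_im, Complex.mul_im, Complex.mul_re, Complex.ofReal_re, Complex.ofReal_im,
        Complex.I_re, Complex.I_im]
      ring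
    · funext t
      rw [norm_t, inner_add_right, h1, h1, inner_smul_right, inner_smul_right, hβ]
      have e : ∀ α : ℂ, ‖(a' : ℂ) * α + b * (Complex.I * α)‖ ^ 2 = (a' ^ 2 + b ^ 2) * ‖α‖ ^ 2 := by
        intro α
        rw [← Complex.normSq_eq_norm_sq, ← Complex.normSq_eq_norm_sq, Complex.normSq_apply, Complex.normSq_apply]
        simp only [Complex.add_re, Complex.add_im, Complex.mul_im, Complex.mul_re, Complex.ofReal_re, Complex.ofReal_im,
          Complex.I_re, Complex.I_im]
        ring
      rw [e]
      ring

/-- lower bound for the Laplacian -/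
lemma lap_lower (hZ : ContDiff ℝ 2 Z) (h0 : ∀ p, Z p ≠ 0)
    (ho : ∀ p, inner ℂ (Z p) (pX Z p + Complex.I • pY Z p) = 0) (p : ℝ × ℝ) :
    - (‖pX Z p + Complex.I • pY Z p‖ ^ 2 / ‖Z p‖ ^ 2) ≤
    pX (pX (fun p => Real.log (‖Z p‖ ^ 2))) p + pY (pY (fun p => Real.log (‖Z p‖ ^ 2))) p := by
  obtain ⟨hLX, hLY, hLap⟩ := lap_log hZ h0 ho
  obtain ⟨h1, h2, h3⟩ := cs_point _ _ _ (h0 p) (ho p)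
  rw [hLap, norm_W]
  set e := ‖pX Z p‖ ^ 2 / ‖Z p‖ ^ 2 - ‖inner ℂ (Z p) (pX Z p)‖ ^ 2 / (‖Z p‖ ^ 2) ^ 2 with he
  set g := ‖pY Z p‖ ^ 2 / ‖Z p‖ ^ 2 - ‖inner ℂ (Z p) (pX Z p)‖ ^ 2 / (‖Z p‖ ^ 2) ^ 2 with hg
  set k := (inner ℂ (pX Z p) (pY Z p)).im / ‖Z p‖ ^ 2 - ‖inner ℂ (Z p) (pX Z p)‖ ^ 2 / (‖Z p‖ ^ 2) ^ 2 with hk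
  have h4 : (‖pX Z p‖ ^ 2 + ‖pY Z p‖ ^ 2 - 2 * (inner ℂ (pX Z p) (pY Z p)).im) / ‖Z p‖ ^ 2 = e + g - 2 * k := by
    rw [he, hg, hk]; ring
  rw [h4]
  have h5 : k ^ 2 ≤ e * g := by nlinarith [sq_nonneg ((inner ℂ (pX Z p) (pY Z p)).re / ‖Z p‖ ^ 2)]
  have h6 : (2 * k) ^ 2 ≤ (e + g) ^ 2 := by nlinarith [sq_nonneg (e - g)]
  have := abs_le_of_sq_le_sq' h6 (by linarith)
  linarith [this.1]

end vec

end

section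

section comps
variable {V : Type*} [NormedAddCommGroup V] [InnerProductSpace ℂ V]

lemma comps_aux (e : Fin 4 → V) (he : Orthonormal ℂ e) (a b : ℝ) (hb : Real.pi / 2 < b) (ha : |a| ≤ 1 / 2)
    (c : Fin 4 → ℝ × ℝ → ℂ) (hc : ∀ i, ContDiff ℝ 2 (c i))
    (h0 : ∀ p, 0 < ∑ i, ‖c i p‖ ^ 2)
    (hp1 : ∀ i, ∀ p : ℝ × ℝ, c i (p.1 + 1, p.2) = c i p)
    (hp2 : ∀ i, ∀ p : ℝ × ℝ, c i (p.1 + a, p.2 + b) = - c i p)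
    (ho : ∀ p, ∑ i, (starRingEnd ℂ) (c i p) * (pX (c i) p + Complex.I * pY (c i) p) = 0) :
    Real.pi ^ 2 ≤ b ^ 2 * J a b (fun p => (∑ i, ‖pX (c i) p + Complex.I * pY (c i) p‖ ^ 2)
      / (∑ i, ‖c i p‖ ^ 2)) ∧
    ∀ p, - ((∑ i, ‖pX (c i) p + Complex.I * pY (c i) p‖ ^ 2) / (∑ i, ‖c i p‖ ^ 2)) ≤
      pX (pX (fun p => Real.log (∑ i, ‖c i p‖ ^ 2))) p
        + pY (pY (fun p => Real.log (∑ i, ‖c i p‖ ^ 2))) p := by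
  have hsm : ContDiff ℝ 2 (fun p => ∑ i, c i p • e i) :=
    ContDiff.sum fun i _ => (hc i).smul contDiff_const
  have hcd : ∀ i, Differentiable ℝ (c i) := fun i => (hc i).differentiable (by norm_num)
  have hfd : ∀ p v, fderiv ℝ (fun p => ∑ i, c i p • e i) p v = ∑ i, fderiv ℝ (c i) p v • e i := by
    intro p v
    have h : HasFDerivAt (fun p => ∑ i, c i p • e i)
        (∑ i, (fderiv ℝ (c i) p).smulRight (e i)) p := by
      apply HasFDerivAt.fun_sum
      intro i _
      exact ((hcd i) p).hasFDerivAt.smul_const (e i)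
    rw [h.fderiv]
    simp
  have hW : ∀ p, pX (fun p => ∑ i, c i p • e i) p + Complex.I • pY (fun p => ∑ i, c i p • e i) p
      = ∑ i, (pX (c i) p + Complex.I * pY (c i) p) • e i := by
    intro p
    unfold pX pY
    rw [hfd, hfd, Finset.smul_sum, ← Finset.sum_add_distrib]
    apply Finset.sum_congr rfl
    intro i _
    rw [add_smul, mul_smul]
  have hn : ∀ l : Fin 4 → ℂ, ‖∑ i, l i • e i‖ ^ 2 = ∑ i, ‖l i‖ ^ 2 := by
    intro l
    have h1 := he.inner_sum l l Finset.univ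
    have h2 : inner ℂ (∑ i, l i • e i) (∑ i, l i • e i) = ((‖∑ i, l i • e i‖ ^ 2 : ℝ) : ℂ) := by
      rw [inner_self_eq_norm_sq_to_K]; push_cast; rfl
    rw [h2] at h1
    have h3 : ∀ z : ℂ, (starRingEnd ℂ) z * z = ((‖z‖ ^ 2 : ℝ) : ℂ) := by
      intro z
      rw [← Complex.normSq_eq_conj_mul_self, Complex.normSq_eq_norm_sq]
    simp only [h3] at h1
    exact_mod_cast h1
  have h0' : ∀ p, (∑ i, c i p • e i) ≠ 0 := by
    intro p hp
    have := h0 p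
    rw [← hn, hp] at this
    simp at this
  have ho' : ∀ p, inner ℂ (∑ i, c i p • e i) (pX (fun p => ∑ i, c i p • e i) p
      + Complex.I • pY (fun p => ∑ i, c i p • e i) p) = 0 := by
    intro p
    rw [hW, he.inner_sum, ← ho p]
  have m1 := nonvanishing_bound a b hb ha hsm h0' (fun p => by simp only [hp1])
    (fun p => by simp only [hp2, neg_smul, Finset.sum_neg_distrib]) ho'
  have m2 := lap_lower hsm h0' ho'
  simp only [hW, hn] at m1 m2
  exact ⟨m1, m2⟩

end comps

lemma comps (a b : ℝ) (hb : Real.pi / 2 < b) (ha : |a| ≤ 1 / 2)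
    (c : Fin 4 → ℝ × ℝ → ℂ) (hc : ∀ i, ContDiff ℝ 2 (c i))
    (h0 : ∀ p, 0 < ∑ i, ‖c i p‖ ^ 2)
    (hp1 : ∀ i, ∀ p : ℝ × ℝ, c i (p.1 + 1, p.2) = c i p)
    (hp2 : ∀ i, ∀ p : ℝ × ℝ, c i (p.1 + a, p.2 + b) = - c i p)
    (ho : ∀ p, ∑ i, (starRingEnd ℂ) (c i p) * (pX (c i) p + Complex.I * pY (c i) p) = 0) :
    Real.pi ^ 2 ≤ b ^ 2 * J a b (fun p => (∑ i, ‖pX (c i) p + Complex.I * pY (c i) p‖ ^ 2)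
      / (∑ i, ‖c i p‖ ^ 2)) ∧
    ∀ p, - ((∑ i, ‖pX (c i) p + Complex.I * pY (c i) p‖ ^ 2) / (∑ i, ‖c i p‖ ^ 2)) ≤
      pX (pX (fun p => Real.log (∑ i, ‖c i p‖ ^ 2))) p
        + pY (pY (fun p => Real.log (∑ i, ‖c i p‖ ^ 2))) p :=
  comps_aux (V := EuclideanSpace ℂ (Fin 4)) (EuclideanSpace.basisFun (Fin 4) ℂ)
    (EuclideanSpace.basisFun (Fin 4) ℂ).orthonormal a b hb ha c hc h0 hp1 hp2 ho

lemma fd_conj {f : ℝ × ℝ → ℂ} (hf : Differentiable ℝ f) (p v : ℝ × ℝ) :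
    fderiv ℝ (fun p => (starRingEnd ℂ) (f p)) p v = (starRingEnd ℂ) (fderiv ℝ f p v) := by
  have h := (Complex.conjCLE.toContinuousLinearMap.hasFDerivAt (x := f p)).comp p (hf p).hasFDerivAt
  have h2 : fderiv ℝ (fun p => (starRingEnd ℂ) (f p)) p = _ := h.fderiv
  rw [h2]; rfl

/-- functions of the second coordinate only -/
lemma fd_snd {h h' : ℝ → ℂ} (hh : ∀ y, HasDerivAt h (h' y) y) (p : ℝ × ℝ) :
    pX (fun p : ℝ × ℝ => h p.2) p = 0 ∧ pY (fun p : ℝ × ℝ => h p.2) p = h' p.2 := by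
  have h1 : HasFDerivAt (fun p : ℝ × ℝ => h p.2)
      (((1 : ℝ →L[ℝ] ℝ).smulRight (h' p.2)).comp (ContinuousLinearMap.snd ℝ ℝ ℝ)) p :=
    (hh p.2).hasFDerivAt.comp p hasFDerivAt_snd
  unfold pX pY
  rw [h1.fderiv]
  simp

theorem regularized (a b : ℝ) (hb : Real.pi / 2 < b) (ha : |a| ≤ 1 / 2)
    (u v : ℝ × ℝ → ℂ) (hu : ContDiff ℝ 2 u) (hv : ContDiff ℝ 2 v) (f : ℝ × ℝ → ℝ)
    (hu1 : ∀ p : ℝ × ℝ, u (p.1 + 1, p.2) = u p) (hu2 : ∀ p : ℝ × ℝ, u (p.1 + a, p.2 + b) = - u p)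
    (hv1 : ∀ p : ℝ × ℝ, v (p.1 + 1, p.2) = v p) (hv2 : ∀ p : ℝ × ℝ, v (p.1 + a, p.2 + b) = - v p)
    (hD1 : ∀ p, pX u p + Complex.I * pY u p = - (f p * v p))
    (hD2 : ∀ p, pX v p - Complex.I * pY v p = f p * u p)
    (ε : ℝ) (hε : 0 < ε) :
    Real.pi ^ 2 ≤ b ^ 2 * J a b (fun p => (f p ^ 2 * (‖u p‖ ^ 2 + ‖v p‖ ^ 2) + (Real.pi / b) ^ 2 * ε ^ 2)
      / (‖u p‖ ^ 2 + ‖v p‖ ^ 2 + ε ^ 2)) ∧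
    ∀ p, - ((f p ^ 2 * (‖u p‖ ^ 2 + ‖v p‖ ^ 2) + (Real.pi / b) ^ 2 * ε ^ 2)
      / (‖u p‖ ^ 2 + ‖v p‖ ^ 2 + ε ^ 2)) ≤
      pX (pX (fun p => Real.log (‖u p‖ ^ 2 + ‖v p‖ ^ 2 + ε ^ 2))) p
        + pY (pY (fun p => Real.log (‖u p‖ ^ 2 + ‖v p‖ ^ 2 + ε ^ 2))) p := by
  have hbpos : 0 < b := by linarith [Real.pi_pos]
  set f0 := Real.pi / b with hf0
  set z1 : ℝ → ℂ := fun y => ((ε * Real.cos (f0 * y) : ℝ) : ℂ) with hz1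
  set z2 : ℝ → ℂ := fun y => -Complex.I * ((ε * Real.sin (f0 * y) : ℝ) : ℂ) with hz2
  have hlin : ∀ y, HasDerivAt (fun y : ℝ => f0 * y) f0 y := fun y => by
    simpa using (hasDerivAt_id y).const_mul f0
  have hz1' : ∀ y, HasDerivAt z1 (((ε * (-Real.sin (f0 * y) * f0) : ℝ) : ℂ)) y := fun y =>
    (((hlin y).cos).const_mul ε).ofReal_comp
  have hz2' : ∀ y, HasDerivAt z2 (-Complex.I * ((ε * (Real.cos (f0 * y) * f0) : ℝ) : ℂ)) y := fun y =>
    ((((hlin y).sin).const_mul ε).ofReal_comp).const_mul (-Complex.I)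
  have hud : Differentiable ℝ u := hu.differentiable (by norm_num)
  have hvd : Differentiable ℝ v := hv.differentiable (by norm_num)
  have hof : ContDiff ℝ 2 (fun x : ℝ => (x : ℂ)) := Complex.ofRealCLM.contDiff
  set c : Fin 4 → ℝ × ℝ → ℂ := ![u, fun p => (starRingEnd ℂ) (v p), fun p => z1 p.2, fun p => z2 p.2] with hc
  have hshift : f0 * b = Real.pi := by rw [hf0]; field_simp
  have D1 : ∀ p, pX (fun p => (starRingEnd ℂ) (v p)) p + Complex.I * pY (fun p => (starRingEnd ℂ) (v p)) p
      = f p * (starRingEnd ℂ) (u p) := by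
    intro p
    have := congrArg (starRingEnd ℂ) (hD2 p)
    simp only [map_sub, map_mul, Complex.conj_I, Complex.conj_ofReal] at this
    rw [← this]
    unfold pX pY
    rw [fd_conj hvd, fd_conj hvd]
    ring
  have D2 : ∀ p : ℝ × ℝ, pX (fun p : ℝ × ℝ => z1 p.2) p + Complex.I * pY (fun p : ℝ × ℝ => z1 p.2) p
      = - Complex.I * ((f0 * (ε * Real.sin (f0 * p.2)) : ℝ) : ℂ) := by
    intro p
    rw [(fd_snd hz1' p).1, (fd_snd hz1' p).2]
    push_cast; ring
  have D3 : ∀ p : ℝ × ℝ, pX (fun p : ℝ × ℝ => z2 p.2) p + Complex.I * pY (fun p : ℝ × ℝ => z2 p.2) p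
      = ((f0 * (ε * Real.cos (f0 * p.2)) : ℝ) : ℂ) := by
    intro p
    rw [(fd_snd hz2' p).1, (fd_snd hz2' p).2, ← mul_assoc, mul_neg, Complex.I_mul_I]
    push_cast; ring
  have hρ : ∀ p, ∑ i, ‖c i p‖ ^ 2 = ‖u p‖ ^ 2 + ‖v p‖ ^ 2 + ε ^ 2 := by
    intro p
    simp only [Fin.sum_univ_four, hc, Matrix.cons_val, hz1, hz2, norm_mul, norm_neg, Complex.norm_I,
      Complex.norm_real, one_mul, Real.norm_eq_abs, sq_abs, RCLike.norm_conj, mul_pow]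
    linear_combination ε ^ 2 * Real.sin_sq_add_cos_sq (f0 * p.2)
  have hDn : ∀ p, ∑ i, ‖pX (c i) p + Complex.I * pY (c i) p‖ ^ 2 =
      f p ^ 2 * (‖u p‖ ^ 2 + ‖v p‖ ^ 2) + f0 ^ 2 * ε ^ 2 := by
    intro p
    simp only [Fin.sum_univ_four, hc, Matrix.cons_val]
    rw [hD1, D1, D2, D3]
    simp only [norm_mul, norm_neg, Complex.norm_I,
      Complex.norm_real, one_mul, Real.norm_eq_abs, sq_abs, RCLike.norm_conj, mul_pow, abs_mul]
    linear_combination f0 ^ 2 * ε ^ 2 * Real.sin_sq_add_cos_sq (f0 * p.2)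
  have main := comps a b hb ha c ?_ ?_ ?_ ?_ ?_
  · simp only [hρ, hDn] at main
    exact main
  · intro i
    fin_cases i
    · exact hu
    · exact (Complex.conjCLE.contDiff (n := 2)).comp hv
    · show ContDiff ℝ 2 (fun p : ℝ × ℝ => ((ε * Real.cos (f0 * p.2) : ℝ) : ℂ))
      exact hof.comp (by fun_prop)
    · show ContDiff ℝ 2 (fun p : ℝ × ℝ => -Complex.I * ((ε * Real.sin (f0 * p.2) : ℝ) : ℂ))
      exact contDiff_const.mul (hof.comp (by fun_prop))
  · intro p; rw [hρ]; positivity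
  · intro i p
    fin_cases i
    · exact hu1 p
    · exact congrArg (starRingEnd ℂ) (hv1 p)
    · rfl
    · rfl
  · intro i p
    fin_cases i
    · exact hu2 p
    · exact (congrArg (starRingEnd ℂ) (hv2 p)).trans (map_neg _ _)
    · show ((ε * Real.cos (f0 * (p.2 + b)) : ℝ) : ℂ) = - ((ε * Real.cos (f0 * p.2) : ℝ) : ℂ)
      rw [mul_add, hshift, Real.cos_add_pi]; push_cast; ring
    · show -Complex.I * ((ε * Real.sin (f0 * (p.2 + b)) : ℝ) : ℂ) = - (-Complex.I * ((ε * Real.sin (f0 * p.2) : ℝ) : ℂ))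
      rw [mul_add, hshift, Real.sin_add_pi]; push_cast; ring
  · intro p
    simp only [Fin.sum_univ_four, hc, Matrix.cons_val]
    rw [hD1, D1, D2, D3]
    simp only [hz1, hz2, Complex.conj_ofReal, Complex.conj_conj, map_mul, map_neg, Complex.conj_I]
    push_cast
    ring

end

section
open MeasureTheory

lemma Per.bounded {a b : ℝ} (hb : 0 < b) {f : ℝ × ℝ → ℝ} (hf : Continuous f) (hp : Per a b f) :
    ∃ C, ∀ p, |f p| ≤ C := by
  have h1 : Function.Periodic f ((1, 0) : ℝ × ℝ) := by
    intro p
    have := hp.1 p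
    rw [← this]; congr 1; ext <;> simp
  have h2 : Function.Periodic f ((a, b) : ℝ × ℝ) := fun p => hp.2 p
  obtain ⟨C, hC⟩ := ((isCompact_Icc (a := (0:ℝ)) (b := 1)).prod (isCompact_Icc (a := (0:ℝ)) (b := b))
    ).exists_bound_of_continuousOn hf.continuousOn
  refine ⟨C, fun p => ?_⟩
  set n := ⌊p.2 / b⌋ with hn
  set q := p - n • ((a, b) : ℝ × ℝ) with hq
  set m := ⌊q.1⌋ with hm
  have e1 : f (q - m • ((1, 0) : ℝ × ℝ)) = f p := by
    rw [h1.sub_zsmul_eq, hq, h2.sub_zsmul_eq]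
  rw [← e1]
  apply hC
  have q2 : q.2 = p.2 - n * b := by simp [hq]
  have f1 := Int.floor_le (p.2 / b)
  have f2 := Int.lt_floor_add_one (p.2 / b)
  rw [← hn] at f1 f2
  rw [le_div_iff₀ hb] at f1
  rw [div_lt_iff₀ hb] at f2
  have g1 := Int.floor_le q.1
  have g2 := Int.lt_floor_add_one q.1
  rw [← hm] at g1 g2
  have r1 : (q - m • ((1, 0) : ℝ × ℝ)).1 = q.1 - m := by
    rw [Prod.fst_sub, Prod.smul_fst, zsmul_eq_mul, mul_one]
  have r2 : (q - m • ((1, 0) : ℝ × ℝ)).2 = q.2 := by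
    rw [Prod.snd_sub, Prod.smul_snd, smul_zero, sub_zero]
  rw [Set.mem_prod, Set.mem_Icc, Set.mem_Icc, r1, r2, q2]
  refine ⟨⟨?_, ?_⟩, ?_, ?_⟩ <;> linarith

lemma fd_prod {g1 g1' g2 g2' : ℝ → ℝ} (h1 : ∀ x, HasDerivAt g1 (g1' x) x)
    (h2 : ∀ x, HasDerivAt g2 (g2' x) x) (p : ℝ × ℝ) :
    HasFDerivAt (fun p : ℝ × ℝ => g1 p.1 * g2 p.2)
      (g1 p.1 • (((1 : ℝ →L[ℝ] ℝ).smulRight (g2' p.2)).comp (ContinuousLinearMap.snd ℝ ℝ ℝ))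
        + g2 p.2 • (((1 : ℝ →L[ℝ] ℝ).smulRight (g1' p.1)).comp (ContinuousLinearMap.fst ℝ ℝ ℝ))) p := by
  have k1 : HasFDerivAt (fun p : ℝ × ℝ => g1 p.1) _ p := (h1 p.1).hasFDerivAt.comp p hasFDerivAt_fst
  have k2 : HasFDerivAt (fun p : ℝ × ℝ => g2 p.2) _ p := (h2 p.2).hasFDerivAt.comp p hasFDerivAt_snd
  exact k1.mul k2

lemma green1 {a b : ℝ} (hb : 0 < b) {v : ℝ × ℝ → ℝ} (hv : ContDiff ℝ 1 v) (hp : Per a b v)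
    {g1 g1' g2 g2' : ℝ → ℝ} (h1 : ∀ x, HasDerivAt g1 (g1' x) x)
    (h2 : ∀ x, HasDerivAt g2 (g2' x) x)
    (i1 : Integrable g1) (i1' : Integrable g1') (i2 : Integrable g2) (i2' : Integrable g2') :
    (∫ p, v p * (g1' p.1 * g2 p.2) = - ∫ p, pX v p * (g1 p.1 * g2 p.2)) ∧
    (∫ p, v p * (g1 p.1 * g2' p.2) = - ∫ p, pY v p * (g1 p.1 * g2 p.2)) := by
  have hint : ∀ {w : ℝ × ℝ → ℝ}, Continuous w → Per a b w → ∀ {k1 k2 : ℝ → ℝ}, Integrable k1 →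
      Integrable k2 → Integrable (fun p : ℝ × ℝ => w p * (k1 p.1 * k2 p.2)) := by
    intro w hw hwp k1 k2 hk1 hk2
    obtain ⟨C, hC⟩ := hwp.bounded hb hw
    exact (hk1.mul_prod hk2).bdd_mul (c := C) hw.aestronglyMeasurable (Filter.Eventually.of_forall hC)
  have hfx : ∀ p, fderiv ℝ (fun p : ℝ × ℝ => g1 p.1 * g2 p.2) p (1, 0) = g1' p.1 * g2 p.2 := by
    intro p; rw [(fd_prod h1 h2 p).fderiv]; simp; ring
  have hfy : ∀ p, fderiv ℝ (fun p : ℝ × ℝ => g1 p.1 * g2 p.2) p (0, 1) = g1 p.1 * g2' p.2 := by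
    intro p; rw [(fd_prod h1 h2 p).fderiv]; simp
  have hvd : Differentiable ℝ v := hv.differentiable (by norm_num)
  have hgd : Differentiable ℝ (fun p : ℝ × ℝ => g1 p.1 * g2 p.2) :=
    fun p => (fd_prod h1 h2 p).differentiableAt
  constructor
  · have := integral_mul_fderiv_eq_neg_fderiv_mul_of_integrable (μ := volume) (f := v)
      (g := fun p : ℝ × ℝ => g1 p.1 * g2 p.2) (v := (1, 0))
      (hint (cont_pX hv) hp.pX i1 i2) (by simp only [hfx]; exact hint hv.continuous hp i1' i2)
      (hint hv.continuous hp i1 i2) (fun x _ => hvd x) (fun x _ => hgd x)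
    simp only [hfx] at this
    exact this
  · have := integral_mul_fderiv_eq_neg_fderiv_mul_of_integrable (μ := volume) (f := v)
      (g := fun p : ℝ × ℝ => g1 p.1 * g2 p.2) (v := (0, 1))
      (hint (cont_pY hv) hp.pY i1 i2) (by simp only [hfy]; exact hint hv.continuous hp i1 i2')
      (hint hv.continuous hp i1 i2) (fun x _ => hvd x) (fun x _ => hgd x)
    simp only [hfy] at this
    exact this

lemma int_bdd {a b : ℝ} (hb : 0 < b) {w : ℝ × ℝ → ℝ} (hw : Continuous w) (hwp : Per a b w)
    {G : ℝ × ℝ → ℝ} (hG : Integrable G) : Integrable (fun p => w p * G p) := by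
  obtain ⟨C, hC⟩ := hwp.bounded hb hw
  exact hG.bdd_mul (c := C) hw.aestronglyMeasurable (Filter.Eventually.of_forall hC)

/-- the Gaussian facts -/
lemma gauss (κ x0 : ℝ) (hκ : 0 < κ) :
    (∀ x, HasDerivAt (fun x => Real.exp (-κ * (x - x0) ^ 2))
      (-2 * κ * ((x - x0) * Real.exp (-κ * (x - x0) ^ 2))) x) ∧
    (∀ x, HasDerivAt (fun x => -2 * κ * ((x - x0) * Real.exp (-κ * (x - x0) ^ 2)))
      ((4 * κ ^ 2 * (x - x0) ^ 2 - 2 * κ) * Real.exp (-κ * (x - x0) ^ 2)) x) ∧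
    Integrable (fun x => Real.exp (-κ * (x - x0) ^ 2)) ∧
    Integrable (fun x => -2 * κ * ((x - x0) * Real.exp (-κ * (x - x0) ^ 2))) ∧
    Integrable (fun x => (4 * κ ^ 2 * (x - x0) ^ 2 - 2 * κ) * Real.exp (-κ * (x - x0) ^ 2)) := by
  have hl : ∀ x, HasDerivAt (fun x => x - x0) 1 x := fun x => (hasDerivAt_id x).sub_const x0
  have hd : ∀ x, HasDerivAt (fun x => Real.exp (-κ * (x - x0) ^ 2))
      (-2 * κ * ((x - x0) * Real.exp (-κ * (x - x0) ^ 2))) x := by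
    intro x
    refine ((((hl x).pow 2).const_mul (-κ)).exp).congr_deriv ?_
    simp; ring
  have j0 := integrable_exp_neg_mul_sq hκ
  have j1 := integrable_mul_exp_neg_mul_sq hκ
  have j2 : Integrable fun x : ℝ => x ^ 2 * Real.exp (-κ * x ^ 2) := by
    have := integrable_rpow_mul_exp_neg_mul_sq hκ (s := 2) (by norm_num)
    simpa using this
  refine ⟨hd, ?_, j0.comp_sub_right x0, (j1.comp_sub_right x0).const_mul _, ?_⟩
  · intro x
    refine (((hl x).mul (hd x)).const_mul (-2 * κ)).congr_deriv ?_
    ring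
  · have := ((j2.comp_sub_right x0).const_mul (4 * κ ^ 2)).sub ((j0.comp_sub_right x0).const_mul (2 * κ))
    refine this.congr (Filter.Eventually.of_forall fun x => ?_)
    simp only [Pi.sub_apply]
    ring

theorem null_set {a b : ℝ} (hb : 0 < b) (ρ : ℝ × ℝ → ℝ) (hρ : ContDiff ℝ 2 ρ) (hp : Per a b ρ)
    (hρ0 : ∀ p, 0 ≤ ρ p) (p0 : ℝ × ℝ) (hp0 : 0 < ρ p0) (K : ℝ)
    (hlap : ∀ ε : ℝ, 0 < ε → ε ≤ 1 → ∀ p, -K ≤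
      pX (pX (fun p => Real.log (ρ p + ε ^ 2))) p + pY (pY (fun p => Real.log (ρ p + ε ^ 2))) p) :
    volume {p | ρ p = 0} = 0 := by
  obtain ⟨M, hM⟩ := hp.bounded hb hρ.continuous
  have hM' : ∀ p, ρ p ≤ M := fun p => (le_abs_self _).trans (hM p)
  have hM0 : 0 < M := hp0.trans_le (hM' p0)
  -- neighbourhood
  obtain ⟨d, hd, hball⟩ : ∃ d : ℝ, 0 < d ∧ ∀ p : ℝ × ℝ, (p.1 - p0.1) ^ 2 + (p.2 - p0.2) ^ 2 < d →
      ρ p0 / 2 < ρ p := by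
    have hc := hρ.continuous.continuousAt (x := p0)
    have hev : ∀ᶠ p in nhds p0, ρ p0 / 2 < ρ p := hc.eventually (lt_mem_nhds (by linarith))
    obtain ⟨r, hr, hr'⟩ := Metric.eventually_nhds_iff.1 hev
    refine ⟨r ^ 2, by positivity, fun p hpd => hr' ?_⟩
    rw [Prod.dist_eq, max_lt_iff, Real.dist_eq, Real.dist_eq]
    constructor
    · exact abs_lt_of_sq_lt_sq (by nlinarith [sq_nonneg (p.2 - p0.2)]) hr.le
    · exact abs_lt_of_sq_lt_sq (by nlinarith [sq_nonneg (p.1 - p0.1)]) hr.le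
  set κ : ℝ := 2 / d with hκdef
  have hκ : 0 < κ := by positivity
  have hκd : κ * d = 2 := by rw [hκdef]; field_simp
  obtain ⟨d1, d1', i1, i1', i1''⟩ := gauss κ p0.1 hκ
  obtain ⟨d2, d2', i2, i2', i2''⟩ := gauss κ p0.2 hκ
  set G : ℝ × ℝ → ℝ := fun p => Real.exp (-κ * (p.1 - p0.1) ^ 2) * Real.exp (-κ * (p.2 - p0.2) ^ 2) with hG
  have hGpos : ∀ p, 0 < G p := fun p => by rw [hG]; positivity
  set H : ℝ × ℝ → ℝ := fun p =>
    (4 * κ ^ 2 * (p.1 - p0.1) ^ 2 - 2 * κ) * Real.exp (-κ * (p.1 - p0.1) ^ 2) * Real.exp (-κ * (p.2 - p0.2) ^ 2)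
    + Real.exp (-κ * (p.1 - p0.1) ^ 2) *
      ((4 * κ ^ 2 * (p.2 - p0.2) ^ 2 - 2 * κ) * Real.exp (-κ * (p.2 - p0.2) ^ 2)) with hH
  have hHG : ∀ p, H p = 4 * κ * (κ * ((p.1 - p0.1) ^ 2 + (p.2 - p0.2) ^ 2) - 1) * G p := by
    intro p; simp only [hH, hG]; ring
  have hGi : Integrable G := i1.mul_prod i2
  have hH1 : Integrable (fun p : ℝ × ℝ => (4 * κ ^ 2 * (p.1 - p0.1) ^ 2 - 2 * κ)
      * Real.exp (-κ * (p.1 - p0.1) ^ 2) * Real.exp (-κ * (p.2 - p0.2) ^ 2)) := i1''.mul_prod i2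
  have hH2 : Integrable (fun p : ℝ × ℝ => Real.exp (-κ * (p.1 - p0.1) ^ 2) *
      ((4 * κ ^ 2 * (p.2 - p0.2) ^ 2 - 2 * κ) * Real.exp (-κ * (p.2 - p0.2) ^ 2))) := i1.mul_prod i2''
  have hHi : Integrable H := hH1.add hH2
  have hHpos : ∀ p : ℝ × ℝ, d ≤ (p.1 - p0.1) ^ 2 + (p.2 - p0.2) ^ 2 → 0 < H p := by
    intro p hpd
    rw [hHG]
    have : κ * d ≤ κ * ((p.1 - p0.1) ^ 2 + (p.2 - p0.2) ^ 2) := by gcongr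
    have h2 : 0 < κ * ((p.1 - p0.1) ^ 2 + (p.2 - p0.2) ^ 2) - 1 := by linarith
    have := hGpos p
    positivity
  set E : Set (ℝ × ℝ) := {p | ρ p = 0} with hE
  have hEm : MeasurableSet E := (isClosed_singleton.preimage hρ.continuous).measurableSet
  have hEd : ∀ p ∈ E, d ≤ (p.1 - p0.1) ^ 2 + (p.2 - p0.2) ^ 2 := by
    intro p hpE
    by_contra! hcon
    have := hball p hcon
    have : ρ p = 0 := hpE
    linarith
  set C := Real.log (M + 1) with hC
  set C1 := |C - Real.log (ρ p0 / 2)| with hC1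
  set m := ∫ p in E, |H p| with hm
  have hm0 : 0 ≤ m := by rw [hm]; positivity
  have key : ∀ ε : ℝ, 0 < ε → ε ≤ 1 →
      -K * (∫ p, G p) ≤ C1 * (∫ p, |H p|) + (2 * Real.log ε - C) * m := by
    intro ε hε hε1
    have hε2 : 0 < ε ^ 2 := by positivity
    have hε3 : ε ^ 2 ≤ 1 := by nlinarith
    set v : ℝ × ℝ → ℝ := fun p => Real.log (ρ p + ε ^ 2) with hv
    have hv2 : ContDiff ℝ 2 v := (hρ.add contDiff_const).log (fun p => by have := hρ0 p; positivity)
    have hvp : Per a b v := ⟨fun p => by simp only [hv, hp.1], fun p => by simp only [hv, hp.2]⟩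
    have hX1 : ContDiff ℝ 1 (pX v) := by exact_mod_cast contDiff_pX (n := 1) (by exact_mod_cast hv2)
    have hY1 : ContDiff ℝ 1 (pY v) := by exact_mod_cast contDiff_pY (n := 1) (by exact_mod_cast hv2)
    have hv1 : ContDiff ℝ 1 v := hv2.of_le (by norm_num)
    have a1 := (green1 hb hv1 hvp d1' d2 i1' i1'' i2 i2').1
    have a2 := (green1 hb hX1 hvp.pX d1 d2 i1 i1' i2 i2').1
    have a3 := (green1 hb hv1 hvp d1 d2' i1 i1' i2' i2'').2
    have a4 := (green1 hb hY1 hvp.pY d1 d2 i1 i1' i2 i2').2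
    rw [a2, neg_neg] at a1
    rw [a4, neg_neg] at a3
    -- Green identity for v and for constants
    have g1 : ∫ p, v p * H p = ∫ p, (pX (pX v) p + pY (pY v) p) * G p := by
      have e1 : ∫ p, v p * H p = (∫ p, v p * ((4 * κ ^ 2 * (p.1 - p0.1) ^ 2 - 2 * κ)
          * Real.exp (-κ * (p.1 - p0.1) ^ 2) * Real.exp (-κ * (p.2 - p0.2) ^ 2)))
          + ∫ p, v p * (Real.exp (-κ * (p.1 - p0.1) ^ 2) *
      ((4 * κ ^ 2 * (p.2 - p0.2) ^ 2 - 2 * κ) * Real.exp (-κ * (p.2 - p0.2) ^ 2))) := by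
        rw [← integral_add (int_bdd hb hv2.continuous hvp hH1) (int_bdd hb hv2.continuous hvp hH2)]
        congr 1; ext p; simp only [hH]; ring
      rw [e1, a1, a3, ← integral_add (int_bdd hb (cont_pX hX1) hvp.pX.pX hGi)
        (int_bdd hb (cont_pY hY1) hvp.pY.pY hGi)]
      congr 1; ext p; ring
    have g0 : ∫ p, H p = 0 := by
      have c1 := (green1 (a := a) hb (v := fun _ => (1:ℝ)) contDiff_const ⟨fun _ => rfl, fun _ => rfl⟩
        d1' d2 i1' i1'' i2 i2').1
      have c2 := (green1 (a := a) hb (v := fun _ => (1:ℝ)) contDiff_const ⟨fun _ => rfl, fun _ => rfl⟩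
        d1 d2' i1 i1' i2' i2'').2
      have z1 : ∀ p, pX (fun _ : ℝ × ℝ => (1:ℝ)) p = 0 := fun p => by simp [pX]
      have z2 : ∀ p, pY (fun _ : ℝ × ℝ => (1:ℝ)) p = 0 := fun p => by simp [pY]
      simp only [z1, z2, one_mul, zero_mul, integral_zero, neg_zero] at c1 c2
      rw [hH, integral_add hH1 hH2, c1, c2, add_zero]
    have hvi : Integrable (fun p => v p * H p) := int_bdd hb hv2.continuous hvp hHi
    have lower : -K * (∫ p, G p) ≤ ∫ p, v p * H p := by
      rw [g1, ← integral_const_mul]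
      apply integral_mono (hGi.const_mul _)
      · refine int_bdd (a := a) hb ((cont_pX hX1).add (cont_pY hY1)) ⟨?_, ?_⟩ hGi
        · intro p; simp only [Pi.add_apply]; rw [hvp.pX.pX.1, hvp.pY.pY.1]
        · intro p; simp only [Pi.add_apply]; rw [hvp.pX.pX.2, hvp.pY.pY.2]
      · intro p
        exact mul_le_mul_of_nonneg_right (hlap ε hε hε1 p) (hGpos p).le
    have upper : ∫ p, v p * H p ≤ C1 * (∫ p, |H p|) + (2 * Real.log ε - C) * m := by
      have e1 : ∫ p, v p * H p = ∫ p, (v p * H p - C * H p) := by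
        rw [integral_sub hvi (hHi.const_mul C), integral_const_mul, g0]; ring
      have e2 : C1 * (∫ p, |H p|) + (2 * Real.log ε - C) * m =
          ∫ p, (C1 * |H p| + (2 * Real.log ε - C) * E.indicator (fun p => |H p|) p) := by
        rw [integral_add (hHi.abs.const_mul _) ((hHi.abs.indicator hEm).const_mul _), integral_const_mul,
          integral_const_mul, integral_indicator hEm]
      rw [e1, e2]
      apply integral_mono (hvi.sub (hHi.const_mul C))
        ((hHi.abs.const_mul _).add ((hHi.abs.indicator hEm).const_mul _))
      intro p
      show v p * H p - C * H p ≤ C1 * |H p| + (2 * Real.log ε - C) * E.indicator (fun p => |H p|) p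
      have hvC : v p ≤ C := Real.log_le_log (by have := hρ0 p; positivity) (by linarith [hM' p])
      have hC10 : 0 ≤ C1 := abs_nonneg _
      by_cases hpd : (p.1 - p0.1) ^ 2 + (p.2 - p0.2) ^ 2 < d
      · have hpE : p ∉ E := fun h => absurd (hEd p h) (not_le.2 hpd)
        rw [Set.indicator_of_notMem hpE, mul_zero, add_zero, ← sub_mul]
        have h1 : |v p - C| ≤ C1 := by
          have hvl : Real.log (ρ p0 / 2) ≤ v p :=
            Real.log_le_log (by linarith) (by linarith [hball p hpd])
          rw [abs_sub_comm, abs_of_nonneg (by linarith)]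
          exact le_trans (by linarith) (le_abs_self _)
        calc (v p - C) * H p ≤ |(v p - C) * H p| := le_abs_self _
          _ = |v p - C| * |H p| := abs_mul _ _
          _ ≤ C1 * |H p| := by gcongr
      · have hHp := hHpos p (not_lt.1 hpd)
        rw [← sub_mul]
        by_cases hpE : p ∈ E
        · rw [Set.indicator_of_mem hpE, abs_of_pos hHp]
          have : v p = 2 * Real.log ε := by
            have h0 : ρ p = 0 := hpE
            simp only [hv, h0, zero_add, Real.log_pow]; norm_num
          rw [this]
          nlinarith [mul_nonneg hC10 hHp.le]
        · rw [Set.indicator_of_notMem hpE, mul_zero, add_zero, abs_of_pos hHp]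
          nlinarith [mul_nonneg hC10 hHp.le, mul_nonneg (sub_nonneg.2 hvC) hHp.le]
    exact lower.trans upper
  have hmz : m = 0 := by
    by_contra hne
    have hmpos : 0 < m := lt_of_le_of_ne hm0 (Ne.symm hne)
    set A := C1 * (∫ p, |H p|) + K * (∫ p, G p) with hA
    have k1 : ∀ ε : ℝ, 0 < ε → ε ≤ 1 → (C - 2 * Real.log ε) * m ≤ A := by
      intro ε h1 h2
      have := key ε h1 h2
      rw [hA]; linarith
    set T := max 0 ((A / m - C) / 2 + 1) with hT
    have hT0 : 0 ≤ T := le_max_left _ _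
    have hT1 : (A / m - C) / 2 + 1 ≤ T := le_max_right _ _
    have := k1 (Real.exp (-T)) (Real.exp_pos _) (Real.exp_le_one_iff.2 (by linarith))
    rw [Real.log_exp, ← le_div_iff₀ hmpos] at this
    linarith
  have hae := (setIntegral_eq_zero_iff_of_nonneg_ae (μ := volume) (s := E)
    (Filter.Eventually.of_forall fun p => abs_nonneg (H p)) hHi.abs.integrableOn).1 hmz
  rw [Filter.EventuallyEq, ae_restrict_iff' hEm] at hae
  rw [ae_iff] at hae
  refine measure_mono_null ?_ hae
  intro p hpE
  simp only [Set.mem_ofPred_eq, Classical.not_imp]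
  refine ⟨hpE, ?_⟩
  have := hHpos p (hEd p hpE)
  simp only [Pi.zero_apply, abs_eq_zero]
  exact this.ne'

end

section
open MeasureTheory Filter Topology

lemma null_pullback (a b : ℝ) (hb : 0 < b) {E : Set (ℝ × ℝ)} (hE : volume E = 0) :
    ∀ᵐ s : ℝ, ∀ᵐ t : ℝ, ((s + t * a, t * b) : ℝ × ℝ) ∉ E := by
  let T : (ℝ × ℝ) ≃ₗ[ℝ] (ℝ × ℝ) :=
    { toFun := fun p => (p.1 + p.2 * a, p.2 * b)
      map_add' := fun p q => by ext <;> simp <;> ring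
      map_smul' := fun c p => by ext <;> simp <;> ring
      invFun := fun p => (p.1 - p.2 / b * a, p.2 / b)
      left_inv := fun p => by ext <;> field_simp <;> ring
      right_inv := fun p => by ext <;> field_simp <;> ring }
  have h := Measure.addHaar_preimage_linearMap (volume : Measure (ℝ × ℝ))
    (f := T.toLinearMap) (LinearEquiv.isUnit_det' T).ne_zero E
  rw [hE, mul_zero] at h
  have h2 : ∀ᵐ p : ℝ × ℝ ∂((volume : Measure ℝ).prod volume), T p ∉ E := by
    exact measure_mono_null (fun p hp => by simpa using hp) h
  exact Measure.ae_ae_of_ae_prod h2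

theorem limit_bound (a b : ℝ) (hb : Real.pi / 2 < b) (ha : |a| ≤ 1 / 2)
    (u v : ℝ × ℝ → ℂ) (hu : ContDiff ℝ 2 u) (hv : ContDiff ℝ 2 v) (f : ℝ × ℝ → ℝ)
    (hf : Continuous f) (hfp : Per a b f)
    (hu1 : ∀ p : ℝ × ℝ, u (p.1 + 1, p.2) = u p) (hu2 : ∀ p : ℝ × ℝ, u (p.1 + a, p.2 + b) = - u p)
    (hv1 : ∀ p : ℝ × ℝ, v (p.1 + 1, p.2) = v p) (hv2 : ∀ p : ℝ × ℝ, v (p.1 + a, p.2 + b) = - v p)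
    (hD1 : ∀ p, pX u p + Complex.I * pY u p = - (f p * v p))
    (hD2 : ∀ p, pX v p - Complex.I * pY v p = f p * u p)
    (p0 : ℝ × ℝ) (hp0 : u p0 ≠ 0 ∨ v p0 ≠ 0) :
    Real.pi ^ 2 ≤ b ^ 2 * J a b (fun p => f p ^ 2) := by
  have hbpos : 0 < b := by linarith [Real.pi_pos]
  have reg := regularized a b hb ha u v hu hv f hu1 hu2 hv1 hv2 hD1 hD2
  set ρ : ℝ × ℝ → ℝ := fun p => ‖u p‖ ^ 2 + ‖v p‖ ^ 2 with hρ
  have hρs : ContDiff ℝ 2 ρ := (hu.norm_sq ℂ).add (hv.norm_sq ℂ)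
  have hρc := hρs.continuous
  have hρ0 : ∀ p, 0 ≤ ρ p := fun p => by simp only [hρ]; positivity
  have hρp : Per a b ρ := ⟨fun p => by simp only [hρ, hu1, hv1], fun p => by simp only [hρ, hu2, hv2, norm_neg]⟩
  have hρp0 : 0 < ρ p0 := by
    simp only [hρ]
    rcases hp0 with h | h <;> positivity
  obtain ⟨C, hC⟩ := hfp.bounded hbpos hf
  set f0 := Real.pi / b with hf0
  set K := C ^ 2 + f0 ^ 2 with hK
  have hfC : ∀ p, f p ^ 2 ≤ K := by
    intro p
    have := sq_le_sq' (abs_le.1 (hC p)).1 (abs_le.1 (hC p)).2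
    rw [hK]; nlinarith [sq_nonneg f0]
  set F : ℝ → ℝ × ℝ → ℝ := fun ε p => (f p ^ 2 * ρ p + f0 ^ 2 * ε ^ 2) / (ρ p + ε ^ 2) with hF
  have hFK : ∀ ε, 0 < ε → ∀ p, F ε p ≤ K := by
    intro ε hε p
    have h1 := hρ0 p
    have h2 : 0 < ε ^ 2 := by positivity
    simp only [hF]
    rw [div_le_iff₀ (by linarith)]
    have h3 : f0 ^ 2 ≤ K := by rw [hK]; nlinarith [sq_nonneg C]
    nlinarith [mul_le_mul_of_nonneg_right (hfC p) h1, mul_le_mul_of_nonneg_right h3 h2.le]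
  have hF0 : ∀ ε, 0 < ε → ∀ p, 0 ≤ F ε p := by
    intro ε hε p
    have h1 := hρ0 p
    simp only [hF]
    positivity
  have hFabs : ∀ ε, 0 < ε → ∀ p, ‖F ε p‖ ≤ K := by
    intro ε hε p
    rw [Real.norm_eq_abs, abs_of_nonneg (hF0 ε hε p)]; exact hFK ε hε p
  have hFc : ∀ ε, 0 < ε → Continuous (F ε) := by
    intro ε hε
    refine Continuous.div (by fun_prop) (by fun_prop) (fun p => ?_)
    have h1 := hρ0 p
    positivity
  have hnull : volume {p | ρ p = 0} = 0 := by
    refine null_set hbpos ρ hρs hρp hρ0 p0 hρp0 K (fun ε hε _ p => ?_)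
    refine le_trans ?_ ((reg ε hε).2 p)
    exact neg_le_neg (hFK ε hε p)
  have hae := null_pullback a b hbpos hnull
  set e : ℕ → ℝ := fun n => 1 / ((n : ℝ) + 1) with he
  have he0 : ∀ n, 0 < e n := fun n => by simp only [he]; positivity
  have helim : Tendsto e atTop (𝓝 0) := tendsto_one_div_add_atTop_nhds_zero_nat
  have hpt : ∀ p, ρ p ≠ 0 → Tendsto (fun n => F (e n) p) atTop (𝓝 (f p ^ 2)) := by
    intro p hp
    have hcont : ContinuousAt (fun ε : ℝ => F ε p) 0 := by
      simp only [hF]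
      refine ContinuousAt.div (by fun_prop) (by fun_prop) (by simpa using hp)
    have h2 : Tendsto (fun ε : ℝ => F ε p) (𝓝 0) (𝓝 (f p ^ 2)) := by
      have := hcont.tendsto
      have e0 : F 0 p = f p ^ 2 := by simp only [hF]; simp [hp]
      rwa [e0] at this
    exact h2.comp helim
  have hlim : Tendsto (fun n => J a b (F (e n))) atTop (𝓝 (J a b (fun p => f p ^ 2))) := by
    unfold J
    apply intervalIntegral.tendsto_integral_filter_of_dominated_convergence (fun _ => K)
    · exact Eventually.of_forall fun n => (cont_inner a b (hFc _ (he0 n))).aestronglyMeasurable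
    · refine Eventually.of_forall fun n => Eventually.of_forall fun s _ => ?_
      have := intervalIntegral.norm_integral_le_of_norm_le_const (a := (0:ℝ)) (b := 1) (C := K)
        (f := fun t => F (e n) (s + t * a, t * b)) (fun t _ => hFabs _ (he0 n) _)
      simpa using this
    · exact intervalIntegrable_const
    · filter_upwards [hae] with s hs _
      apply intervalIntegral.tendsto_integral_filter_of_dominated_convergence (fun _ => K)
      · refine Eventually.of_forall fun n => Continuous.aestronglyMeasurable ?_
        have := hFc _ (he0 n)
        fun_prop
      · exact Eventually.of_forall fun n => Eventually.of_forall fun t _ => hFabs _ (he0 n) _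
      · exact intervalIntegrable_const
      · filter_upwards [hs] with t ht _
        exact hpt _ ht
  have hlim2 := hlim.const_mul (b ^ 2)
  exact ge_of_tendsto' hlim2 (fun n => (reg (e n) (he0 n)).1)

end

/-- Theorem 4.4 (lower bound, non-trivial spin structure): for the torus `ℝ²/Γ`,
`Γ = ℤ(1,0) + ℤ(a,b)` with `|a| ≤ 1/2` and `b > π/2`, any positive Dirac eigenvalue `λ` of
the conformal metric `e^{2ω} g_{a,b}` for the non-trivial spin structure (spinors periodic
in `(1,0)` and anti-periodic in `(a,b)`) satisfies `λ² · Area ≥ π²/b`. -/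
theorem dirac_first_eigenvalue_flat_torus_nontrivial_spin_lower_bound
    (a b lam : ℝ) (ha : |a| ≤ 1 / 2) (hb : b > Real.pi / 2)
    (ω : ℝ × ℝ → ℝ) (hω : ContDiff ℝ (⊤ : ℕ∞) ω)
    (hω1 : ∀ p : ℝ × ℝ, ω (p.1 + 1, p.2) = ω p)
    (hω2 : ∀ p : ℝ × ℝ, ω (p.1 + a, p.2 + b) = ω p)
    (hlam : 0 < lam)
    (φ : ℝ × ℝ → ℂ × ℂ) (hφ : ContDiff ℝ (⊤ : ℕ∞) φ) (hφ0 : φ ≠ 0)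
    (hφ1 : ∀ p : ℝ × ℝ, φ (p.1 + 1, p.2) = φ p)
    (hφ2 : ∀ p : ℝ × ℝ, φ (p.1 + a, p.2 + b) = -φ p)
    (heq1 : ∀ p : ℝ × ℝ,
      dX (fun q => (φ q).2) p - Complex.I * dY (fun q => (φ q).2) p
        = (lam : ℂ) * Real.exp (ω p) * (φ p).1)
    (heq2 : ∀ p : ℝ × ℝ,
      -(dX (fun q => (φ q).1) p + Complex.I * dY (fun q => (φ q).1) p)
        = (lam : ℂ) * Real.exp (ω p) * (φ p).2) :
    lam ^ 2 * b *
      (∫ t in (0:ℝ)..1, ∫ s in (0:ℝ)..1, Real.exp (2 * ω (s + t * a, t * b)))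
      ≥ Real.pi ^ 2 / b := by
  have hbpos : 0 < b := by linarith [Real.pi_pos]
  have hωc := hω.continuous
  obtain ⟨p0, hp0⟩ := Function.ne_iff.mp hφ0
  have hp1 : (φ p0).1 ≠ 0 ∨ (φ p0).2 ≠ 0 := by
    by_contra! h
    exact hp0 (Prod.ext h.1 h.2)
  have key := limit_bound a b hb ha (fun q => (φ q).1) (fun q => (φ q).2)
    (contDiff_infty.mp hφ.fst 2) (contDiff_infty.mp hφ.snd 2) (fun p => lam * Real.exp (ω p)) (by fun_prop)
    ⟨fun p => by simp only [hω1], fun p => by simp only [hω2]⟩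
    (fun p => by simp only [hφ1]) (fun p => by simp only [hφ2, Prod.fst_neg])
    (fun p => by simp only [hφ1]) (fun p => by simp only [hφ2, Prod.snd_neg])
    (fun p => by
      have h : -(pX (fun q => (φ q).1) p + Complex.I * pY (fun q => (φ q).1) p)
        = (lam : ℂ) * Real.exp (ω p) * (φ p).2 := heq2 p
      rw [Complex.ofReal_mul, ← h, neg_neg])
    (fun p => by
      have h : pX (fun q => (φ q).2) p - Complex.I * pY (fun q => (φ q).2) p
        = (lam : ℂ) * Real.exp (ω p) * (φ p).1 := heq1 p
      rw [Complex.ofReal_mul, ← h])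
    p0 hp1
  have hsq : (fun p => (lam * Real.exp (ω p)) ^ 2)
      = fun p => lam ^ 2 * Real.exp (2 * ω p) := by
    funext p
    rw [mul_pow, ← Real.exp_nat_mul]
    norm_num
  rw [hsq, J_mul, J_swap a b (by fun_prop)] at key
  rw [ge_iff_le, div_le_iff₀ hbpos]
  calc Real.pi ^ 2 ≤ _ := key
    _ = _ := by ring
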